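/- arXiv:1007.0157 — 2 statements merged into one kernel-verified Lean document; each statement's English description precedes it below -/
import Mathlib

section
/- Let G = F₁ *_{a=b} F₂, where F₁, F₂ are free groups and a ∈ F₁ \ {1}, b ∈ F₂ \ {1} are not proper powers. Let u = a₁b₁···a_n b_n and v = a₁'b₁'···a_m'b_m' be elements of G with all a_i, a_j' ∈ F₁ \ ⟨a⟩ and all b_i, b_j' ∈ F₂ \ ⟨b⟩, and let q ∈ ⟨a⟩ \ {1}. Then there exist homomorphisms φ: F₁ → P and ψ: F₂ → Q onto finite groups with |φ(a)| = |ψ(b)| > 1 such that: every nontrivial element of the set Δ₁ = {a₁⁻¹qa₁} ∪ {a_i} ∪ {a_j'} ∪ {a_i a_k⁻¹} ∪ {a_j' a_l'⁻¹} ∪ {a_i a_j'⁻¹} has nontrivial image under φ, every element of Δ₁ not in ⟨a⟩ has image not in ⟨φ(a)⟩, and analogously every nontrivial element of Δ₂ = {b_i} ∪ {b_j'} ∪ {b_i b_k⁻¹} ∪ {b_j' b_l'⁻¹} ∪ {b_i b_j'⁻¹} has nontrivial image under ψ, with elements of Δ₂ outside ⟨b⟩ mapping outside ⟨ψ(b)⟩.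 -/
open Subgroup

/-- An element is not a proper power: `a = w ^ k` forces `|k| ≤ 1`. -/
def NotProperPower {G : Type} [Group G] (a : G) : Prop :=
  ∀ (w : G) (k : ℤ), a = w ^ k → k.natAbs ≤ 1

/-!
The transvections adding `6 p` times the sum of the other coordinates to one coordinate play
ping-pong on the integer vectors with one dominant coordinate, so they embed a free group of finite
rank in the matrices congruent to `1` modulo `p`. Pull back the principal congruence subgroups of
level `p ^ k`: a `p`-th power descends from one of them to the next, so `p ^ s` is the order of `a`
in a suitable one for every large `s`, and that one lies so deep that a prescribed finite set of
nontrivial elements survives. An element outside `⟨a⟩` is kept outside by keeping alive its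
commutator with `a`, since the centralizer of `a` is `⟨a⟩`. As every large power of `p` is available
on both sides, the orders of `a` and `b` can be matched.
-/

open Filter
open scoped Pointwise commutatorElement

section Potency

variable {G H : Type*} [Group G] [Group H] {p : ℕ}

/-- The element `a` is potent along the powers of `p`, relative to the set `D`: for all large `s`,
some finite quotient of `G` gives `a` the order `p ^ s` and kills no element of `D`. Quotients are
encoded by their kernels. -/
def IsPowPotent (p : ℕ) (a : G) (D : Set G) : Prop :=
  ∀ᶠ s in atTop, ∃ N : FiniteIndexNormalSubgroup G,
    orderOf (a : G ⧸ N.toSubgroup) = p ^ s ∧ Disjoint D N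

theorem IsPowPotent.of_map (f : G →* H) {a : G} {D : Set G}
    (h : IsPowPotent p (f a) (f '' D)) : IsPowPotent p a D := by
  filter_upwards [h] with s ⟨N, horder, hdisj⟩
  refine ⟨N.comap f, horder ▸ orderOf_eq_orderOf_iff.2 fun n ↦ ?_, ?_⟩
  · rw [← QuotientGroup.mk_pow, ← QuotientGroup.mk_pow, QuotientGroup.eq_one_iff,
      QuotientGroup.eq_one_iff, FiniteIndexNormalSubgroup.toSubgroup_comap, Subgroup.mem_comap,
      map_pow]
  · exact Set.disjoint_left.2 fun d hd hdN ↦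
      Set.disjoint_left.1 hdisj (Set.mem_image_of_mem f hd) hdN

theorem eventually_disjoint_of_antitone {ι X : Type*} [Preorder ι] {N : ι → Set X}
    (hanti : Antitone N) {D : Set X} (hD : D.Finite) (hdisj : Disjoint D (⋂ i, N i)) :
    ∀ᶠ i in atTop, Disjoint D (N i) := by
  simp_rw [Set.disjoint_left]
  refine (eventually_all_finite hD).2 fun d hd ↦ ?_
  obtain ⟨k, hk⟩ := by simpa using Set.disjoint_left.1 hdisj hd
  filter_upwards [eventually_ge_atTop k] with l hl using fun hdl ↦ hk (hanti hl hdl)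

theorem pow_pow_mem_of_forall_pow_mem_succ {M : Type*} [Monoid M] {p : ℕ} {N : ℕ → Set M}
    (h0 : ∀ g, g ∈ N 0) (hpow : ∀ k, ∀ g ∈ N k, g ^ p ∈ N (k + 1)) (g : M) (k : ℕ) :
    g ^ p ^ k ∈ N k := by
  induction k with
  | zero => exact h0 _
  | succ k ih => rw [pow_succ, pow_mul]; exact hpow k _ ih

theorem IsPowPotent.of_filtration [IsMulTorsionFree G] [Fact p.Prime]
    {N : ℕ → FiniteIndexNormalSubgroup G} (hanti : Antitone N) (h0 : ∀ g, g ∈ N 0)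
    (hpow : ∀ k, ∀ g ∈ N k, g ^ p ∈ N (k + 1)) (hsep : ∀ g, (∀ k, g ∈ N k) → g = 1) {a : G}
    (ha : a ≠ 1) {D : Set G} (hD : D.Finite) (h1 : 1 ∉ D) : IsPowPotent p a D := by
  have hdisj : Disjoint D (⋂ k, (N k : Set G)) := Set.disjoint_left.2 fun d hd hdN ↦
    ne_of_mem_of_not_mem hd h1 (hsep d (Set.mem_iInter.1 hdN))
  obtain ⟨K, hK⟩ := eventually_atTop.1
    (eventually_disjoint_of_antitone (fun _ _ h ↦ hanti h) hD hdisj)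
  filter_upwards [eventually_gt_atTop K] with s hs
  obtain ⟨t, rfl⟩ : ∃ t, s = t + 1 := ⟨s - 1, by lia⟩
  have hne : a ^ p ^ t ≠ 1 := by
    simpa [pow_eq_one_iff_left, (Fact.out : p.Prime).ne_zero] using ha
  obtain ⟨k, hk, hk'⟩ : ∃ k, a ^ p ^ t ∈ N k ∧ a ^ p ^ t ∉ N (k + 1) := by
    by_contra! hall
    exact hne (hsep _ fun k ↦ Nat.rec (h0 _) hall k)
  have htk : t < k + 1 := by
    by_contra! hle
    exact hk' (hanti hle (pow_pow_mem_of_forall_pow_mem_succ (N := fun k ↦ (N k : Set G))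
      h0 hpow a t))
  refine ⟨N (k + 1), orderOf_eq_prime_pow ?_ ?_, hK _ (by lia)⟩
  · rwa [← QuotientGroup.mk_pow, QuotientGroup.eq_one_iff]
  · rw [← QuotientGroup.mk_pow, QuotientGroup.eq_one_iff, pow_succ, pow_mul]
    exact hpow k _ hk

end Potency

theorem natCast_mul_dvd_pow_sub_one {A : Type*} [Ring A] {p m : ℕ} (hpm : p ∣ m) {x : A}
    (hx : (m : A) ∣ x - 1) : ((m * p : ℕ) : A) ∣ x ^ p - 1 := by
  obtain ⟨y, hy⟩ := hx
  have hpow (i : ℕ) : (p : A) ∣ x ^ i - 1 := by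
    rw [← mul_geom_sum, hy, mul_assoc]
    exact (Nat.cast_dvd_cast hpm).mul_right _
  have hsum : (p : A) ∣ ∑ i ∈ Finset.range p, x ^ i := by
    have : ∑ i ∈ Finset.range p, x ^ i = ∑ i ∈ Finset.range p, (x ^ i - 1) + p := by simp
    rw [this]
    exact dvd_add (Finset.dvd_sum fun i _ ↦ hpow i) dvd_rfl
  obtain ⟨z, hz⟩ := hsum
  refine ⟨y * z, ?_⟩
  rw [← mul_geom_sum, hy, hz, Nat.cast_mul, mul_assoc, mul_assoc, ← mul_assoc y,
    ← Nat.cast_comm p y, mul_assoc]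

section Congruence

variable {ι : Type*} [Fintype ι] [DecidableEq ι]

variable (ι) in
/-- The principal congruence subgroup of level `n` of `GL ι ℤ`: the kernel of reduction modulo
`n`, which has finite index as `n ≠ 0`. -/
def principalCongruence (n : ℕ) [NeZero n] : FiniteIndexNormalSubgroup (GL ι ℤ) :=
  .ofSubgroup (Matrix.GeneralLinearGroup.map (Int.castRingHom (ZMod n))).ker

theorem matrix_natCast_dvd_iff {n : ℕ} {M : Matrix ι ι ℤ} :
    (n : Matrix ι ι ℤ) ∣ M ↔ ∀ i j, (n : ℤ) ∣ M i j := by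
  constructor
  · rintro ⟨N, rfl⟩ i j
    exact ⟨N i j, by rw [← nsmul_eq_mul]; simp⟩
  · intro h
    choose N hN using h
    exact ⟨.of N, by rw [← nsmul_eq_mul]; ext i j; simp [hN]⟩

theorem mem_principalCongruence_iff {n : ℕ} [NeZero n] {g : GL ι ℤ} :
    g ∈ principalCongruence ι n ↔ (n : Matrix ι ι ℤ) ∣ g - 1 := by
  have hker : g ∈ principalCongruence ι n ↔
      Matrix.GeneralLinearGroup.map (Int.castRingHom (ZMod n)) g = 1 := MonoidHom.mem_ker
  rw [hker, matrix_natCast_dvd_iff, Units.ext_iff, ← Matrix.ext_iff]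
  refine forall₂_congr fun i j ↦ ?_
  rw [← ZMod.intCast_zmod_eq_zero_iff_dvd, Matrix.sub_apply, Int.cast_sub, sub_eq_zero]
  simp [Matrix.one_apply]

theorem principalCongruence_anti {m n : ℕ} [NeZero m] [NeZero n] (h : m ∣ n) :
    principalCongruence ι n ≤ principalCongruence ι m := fun _ hg ↦
  mem_principalCongruence_iff.2 <|
    (Nat.cast_dvd_cast h).trans (mem_principalCongruence_iff.1 hg)

theorem pow_mem_principalCongruence {p m : ℕ} [NeZero p] [NeZero m] (hpm : p ∣ m) {g : GL ι ℤ}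
    (hg : g ∈ principalCongruence ι m) : g ^ p ∈ principalCongruence ι (m * p) := by
  rw [mem_principalCongruence_iff] at hg ⊢
  simpa using natCast_mul_dvd_pow_sub_one hpm hg

theorem eq_one_of_forall_mem_principalCongruence_pow {p : ℕ} [NeZero p] (hp : p ≠ 1) {g : GL ι ℤ}
    (hg : ∀ k, g ∈ principalCongruence ι (p ^ (k + 1))) : g = 1 := by
  refine Units.ext <| Matrix.ext fun i j ↦ sub_eq_zero.1 ?_
  by_contra hne
  obtain ⟨k, hk⟩ := (Int.finiteMultiplicity_iff (a := p)).2 ⟨hp, hne⟩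
  exact hk <| mod_cast matrix_natCast_dvd_iff.1 (mem_principalCongruence_iff.1 (hg k)) i j

end Congruence

section PingPong

theorem freeGroup_lift_injective_of_zpow_ping_pong {ι G X : Type*} [Nontrivial ι] [Group G]
    [MulAction G X] (g : ι → G) (S : ι → Set X) (hne : ∀ i, (S i).Nonempty)
    (hdisj : Pairwise (Function.onFun Disjoint S))
    (hpp : Pairwise fun i j ↦ ∀ k : ℤ, k ≠ 0 → g i ^ k • S j ⊆ S i) :
    Function.Injective (FreeGroup.lift g) := by
  let f (i : ι) : FreeGroup Unit →* G := FreeGroup.lift fun _ ↦ g i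
  have hlift : FreeGroup.lift g =
      (Monoid.CoprodI.lift f).comp freeGroupEquivCoprodI.toMonoidHom := by
    ext i
    simp [f]
  rw [hlift, MonoidHom.coe_comp]
  refine .comp (Monoid.CoprodI.lift_injective_of_ping_pong f ?_ S hne hdisj ?_)
    freeGroupEquivCoprodI.injective
  · exact .inr ⟨Classical.arbitrary ι,
      (Cardinal.natCast_le_aleph0 (n := 3)).trans (Cardinal.aleph0_le_mk _)⟩
  · intro i j hij w hw
    obtain ⟨k, rfl⟩ : ∃ k : ℤ, FreeGroup.of () ^ k = w :=
      FreeGroup.freeGroupUnitEquivInt.symm.surjective w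
    have hk : k ≠ 0 := by
      rintro rfl
      exact hw (zpow_zero _)
    simpa [f] using hpp hij k hk

theorem transvection_zpow_apply {R V : Type*} [Ring R] [AddCommGroup V] [Module R V]
    {f : Module.Dual R V} {v : V} (h : f v = 0) (k : ℤ) (x : V) :
    (LinearEquiv.transvection h ^ k) x = x + k • f x • v := by
  have hpow (w : V) (hw : f w = 0) (n : ℕ) (y : V) :
      (LinearEquiv.transvection hw ^ n) y = y + n • f y • w := by
    induction n with
    | zero => simp
    | succ n ih =>
      rw [pow_succ', LinearEquiv.mul_apply, ih, LinearEquiv.transvection.apply]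
      simp [hw, add_smul, add_assoc]
  obtain ⟨n, rfl | rfl⟩ := k.eq_nat_or_neg
  · simpa using hpow v h n x
  · rw [zpow_neg, ← inv_zpow, zpow_natCast, LinearEquiv.transvection.inv_eq h (by simp [h]), hpow]
    simp

variable {ι : Type*} [Fintype ι] [DecidableEq ι]

/-- The functional summing all coordinates of an integer vector except the `i`-th. -/
def offDiagonalSum (i : ι) : Module.Dual ℤ (ι → ℤ) := ∑ l ∈ Finset.univ.erase i, LinearMap.proj l

theorem offDiagonalSum_apply (i : ι) (v : ι → ℤ) :
    offDiagonalSum i v = ∑ l ∈ Finset.univ.erase i, v l := by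
  simp [offDiagonalSum, LinearMap.sum_apply]

theorem offDiagonalSum_single (i : ι) (c : ℤ) : offDiagonalSum i (Pi.single i c) = 0 := by
  simp [offDiagonalSum_apply]

/-- The transvection that adds `c` times the sum of all other coordinates to the `i`-th. -/
def rowTransvection (c : ℤ) (i : ι) : (ι → ℤ) ≃ₗ[ℤ] (ι → ℤ) :=
  LinearEquiv.transvection (offDiagonalSum_single i c)

theorem rowTransvection_zpow_apply (c : ℤ) (i : ι) (k : ℤ) (v : ι → ℤ) :
    (rowTransvection c i ^ k) v = v + Pi.single i (k * c * offDiagonalSum i v) := by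
  rw [rowTransvection, transvection_zpow_apply, ← Pi.single_smul, ← Pi.single_smul]
  congr 2
  simp only [smul_eq_mul]
  ring

/-- The integer vectors whose `i`-th coordinate is more than twice as large as all the others
together: the ping-pong table of `rowTransvection c i`. -/
def dominantSet (i : ι) : Set (ι → ℤ) := {v | 2 * ∑ l ∈ Finset.univ.erase i, |v l| < |v i|}

theorem dominantSet_nonempty (i : ι) : (dominantSet i).Nonempty := by
  refine ⟨Pi.single i 1, ?_⟩
  have hrest : ∑ l ∈ Finset.univ.erase i, |(Pi.single i 1 : ι → ℤ) l| = 0 :=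
    Finset.sum_eq_zero fun l hl ↦ by simp [Finset.ne_of_mem_erase hl]
  rw [dominantSet, Set.mem_ofPred_eq, hrest]
  simp

theorem abs_lt_of_mem_dominantSet {i j : ι} (hij : i ≠ j) {v : ι → ℤ} (hv : v ∈ dominantSet i) :
    |v j| < |v i| := by
  have hle := Finset.single_le_sum (fun l _ ↦ abs_nonneg (v l))
    (Finset.mem_erase.2 ⟨hij.symm, Finset.mem_univ j⟩)
  rw [dominantSet, Set.mem_ofPred_eq] at hv
  linarith [abs_nonneg (v j)]

theorem pairwise_disjoint_dominantSet :
    Pairwise (Function.onFun Disjoint (dominantSet (ι := ι))) :=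
  fun _ _ hij ↦ Set.disjoint_left.2 fun _ hi hj ↦
    (abs_lt_of_mem_dominantSet hij hi).not_gt (abs_lt_of_mem_dominantSet hij.symm hj)

theorem add_single_mem_dominantSet {i j : ι} (hij : i ≠ j) {v : ι → ℤ} (hv : v ∈ dominantSet j)
    {m : ℤ} (hm : 6 ≤ |m|) : v + Pi.single i (m * offDiagonalSum i v) ∈ dominantSet i := by
  have hj : j ∈ Finset.univ.erase i := by simp [hij.symm]
  have hi : i ∈ Finset.univ.erase j := by simp [hij]
  set w : ι → ℤ := v + Pi.single i (m * offDiagonalSum i v) with hw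
  have hwi : w i = v i + m * offDiagonalSum i v := by simp [hw]
  have hwrest : ∑ l ∈ Finset.univ.erase i, |w l| = ∑ l ∈ Finset.univ.erase i, |v l| :=
    Finset.sum_congr rfl fun l hl ↦ by simp [hw, Finset.ne_of_mem_erase hl]
  rw [dominantSet, Set.mem_ofPred_eq] at hv ⊢
  rw [← Finset.add_sum_erase _ _ hi, Finset.erase_right_comm] at hv
  rw [hwi, hwrest, offDiagonalSum_apply, ← Finset.add_sum_erase _ _ hj,
    ← Finset.add_sum_erase _ _ hj]
  have hrest := Finset.abs_sum_le_sum_abs v ((Finset.univ.erase i).erase j)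
  set rest := ∑ l ∈ (Finset.univ.erase i).erase j, v l
  have hsum : |v j| - |rest| ≤ |v j + rest| := by
    simpa using abs_sub_abs_le_abs_sub (v j) (-rest)
  have hnew : 6 * |v j + rest| - |v i| ≤ |v i + m * (v j + rest)| := calc
    6 * |v j + rest| - |v i| ≤ |m * (v j + rest)| - |v i| := by rw [abs_mul]; gcongr
    _ ≤ _ := by simpa [add_comm] using abs_sub_abs_le_abs_sub (m * (v j + rest)) (-v i)
  -- `6` is where `2 * (|m| - 2) ≥ |m| + 2` starts to hold.
  linarith [abs_nonneg (v i)]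

theorem lift_rowTransvection_injective [Nontrivial ι] {c : ℤ} (hc : 6 ≤ |c|) :
    Function.Injective (FreeGroup.lift (rowTransvection (ι := ι) c)) := by
  refine freeGroup_lift_injective_of_zpow_ping_pong _ dominantSet dominantSet_nonempty
    pairwise_disjoint_dominantSet fun i j hij k hk ↦ Set.image_subset_iff.2 fun v hv ↦ ?_
  rw [Set.mem_preimage, LinearEquiv.smul_def, rowTransvection_zpow_apply]
  refine add_single_mem_dominantSet hij hv ?_
  rw [abs_mul]
  nlinarith [Int.one_le_abs hk]

variable (ι) in
/-- Linear automorphisms of `ι → ℤ` as invertible matrices, in the standard basis. -/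
noncomputable def linearEquivEquivGL : ((ι → ℤ) ≃ₗ[ℤ] (ι → ℤ)) ≃* GL ι ℤ :=
  (Matrix.GeneralLinearGroup.toLin.trans
    (LinearMap.GeneralLinearGroup.generalLinearEquiv ℤ (ι → ℤ))).symm

theorem coe_linearEquivEquivGL (e : (ι → ℤ) ≃ₗ[ℤ] (ι → ℤ)) :
    (linearEquivEquivGL ι e : Matrix ι ι ℤ) = LinearMap.toMatrix' (e : (ι → ℤ) →ₗ[ℤ] (ι → ℤ)) :=
  rfl

theorem rowTransvection_mem_principalCongruence {n : ℕ} [NeZero n] {c : ℤ} (hn : (n : ℤ) ∣ c)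
    (i : ι) : linearEquivEquivGL ι (rowTransvection c i) ∈ principalCongruence ι n := by
  rw [mem_principalCongruence_iff, matrix_natCast_dvd_iff]
  intro r s
  have hentry : (linearEquivEquivGL ι (rowTransvection c i) - 1 : Matrix ι ι ℤ) r s =
      (Pi.single i (c * offDiagonalSum i (Pi.single s 1)) : ι → ℤ) r := by
    rw [Matrix.sub_apply, coe_linearEquivEquivGL, LinearMap.toMatrix'_apply, sub_eq_iff_eq_add']
    have := rowTransvection_zpow_apply c i 1 (Pi.single s 1)
    simpa [Matrix.one_apply, Pi.single_apply] using congrFun this r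
  rw [hentry, Pi.single_apply]
  split_ifs
  exacts [hn.mul_right _, dvd_zero _]

variable (ι) in
/-- The embedding of a free group in the integer matrices congruent to `1` modulo `p`, sending the
generators to row transvections. The factor `6` is what ping-pong needs. -/
noncomputable def freeGroupToGL (p : ℕ) : FreeGroup ι →* GL ι ℤ :=
  (linearEquivEquivGL ι).toMonoidHom.comp (FreeGroup.lift (rowTransvection (6 * p)))

variable {p : ℕ} [NeZero p]

theorem freeGroupToGL_injective [Nontrivial ι] : Function.Injective (freeGroupToGL ι p) := by
  have hp : 6 ≤ |(6 * p : ℤ)| := by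
    have := NeZero.pos p
    rw [abs_of_nonneg (by positivity)]
    lia
  exact (linearEquivEquivGL ι).injective.comp (lift_rowTransvection_injective hp)

theorem freeGroupToGL_mem_principalCongruence (g : FreeGroup ι) :
    freeGroupToGL ι p g ∈ principalCongruence ι p := by
  have hrange : (freeGroupToGL ι p).range ≤ (principalCongruence ι p).toSubgroup := by
    rw [MonoidHom.range_eq_map, ← FreeGroup.closure_range_of, MonoidHom.map_closure, closure_le]
    rintro _ ⟨_, ⟨i, rfl⟩, rfl⟩
    simpa [freeGroupToGL, FiniteIndexNormalSubgroup.mem_toSubgroup_iff] using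
      rowTransvection_mem_principalCongruence (dvd_mul_left (p : ℤ) 6) i
  exact hrange ⟨g, rfl⟩

end PingPong

section FreeGroupPotency

variable {p : ℕ} [Fact p.Prime]

theorem isPowPotent_freeGroup_of_finite {ι : Type*} [Finite ι] [Nontrivial ι] {a : FreeGroup ι}
    (ha : a ≠ 1) {D : Set (FreeGroup ι)} (hD : D.Finite) (h1 : 1 ∉ D) : IsPowPotent p a D := by
  classical
  cases nonempty_fintype ι
  refine .of_filtration
    (N := fun k ↦ (principalCongruence ι (p ^ (k + 1))).comap (freeGroupToGL ι p))
    ?_ ?_ ?_ ?_ ha hD h1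
  · exact fun k l hkl ↦ FiniteIndexNormalSubgroup.comap_mono _
      (principalCongruence_anti (pow_dvd_pow p (by lia)))
  · exact fun g ↦ principalCongruence_anti (by simp : p ^ (0 + 1) ∣ p)
      (freeGroupToGL_mem_principalCongruence g)
  · intro k g hg
    change freeGroupToGL ι p (g ^ p) ∈ principalCongruence ι (p ^ (k + 1) * p)
    rw [map_pow]
    exact pow_mem_principalCongruence (dvd_pow_self p k.succ_ne_zero) hg
  · exact fun g hg ↦ (map_eq_one_iff _ freeGroupToGL_injective).1
      (eq_one_of_forall_mem_principalCongruence_pow (Fact.out : p.Prime).ne_one hg)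

theorem exists_finite_subset_mem_closure {G : Type*} [Group G] {s : Set G} {g : G}
    (hg : g ∈ closure s) : ∃ t ⊆ s, t.Finite ∧ g ∈ closure t := by
  induction hg using closure_induction with
  | mem x hx => exact ⟨{x}, by simpa using hx, Set.finite_singleton x, mem_closure_singleton_self x⟩
  | one => exact ⟨∅, s.empty_subset, Set.finite_empty, one_mem _⟩
  | mul x y _ _ hx hy =>
    obtain ⟨t, hts, ht, hxt⟩ := hx
    obtain ⟨u, hus, hu, hyu⟩ := hy
    exact ⟨t ∪ u, Set.union_subset hts hus, ht.union hu,
      mul_mem (closure_mono Set.subset_union_left hxt) (closure_mono Set.subset_union_right hyu)⟩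
  | inv x _ hx =>
    obtain ⟨t, hts, ht, hxt⟩ := hx
    exact ⟨t, hts, ht, inv_mem hxt⟩

theorem exists_finite_subset_closure {G : Type*} [Group G] {s D : Set G} (hD : D.Finite)
    (hDs : D ⊆ closure s) : ∃ t ⊆ s, t.Finite ∧ D ⊆ closure t := by
  choose! t hts ht hmem using fun g (hg : g ∈ D) ↦ exists_finite_subset_mem_closure (hDs hg)
  exact ⟨⋃ g ∈ D, t g, Set.iUnion₂_subset hts, hD.biUnion ht, fun g hg ↦
    closure_mono (Set.subset_biUnion_of_mem hg) (hmem g hg)⟩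

theorem freeGroup_map_injOn_closure {α β : Type*} {r : α → β} {s : Set α}
    (h : Set.InjOn r s) :
    Set.InjOn (FreeGroup.map r) (closure (FreeGroup.of '' s) : Set (FreeGroup α)) := by
  obtain hα | hα := isEmpty_or_nonempty α
  · exact Set.injOn_of_subsingleton _ _
  have hleft : Set.EqOn (FreeGroup.map (Function.invFunOn r s ∘ r)) (MonoidHom.id _)
      (closure (FreeGroup.of '' s)) := by
    refine MonoidHom.eqOn_closure ?_
    rintro _ ⟨x, hx, rfl⟩
    simp [h.leftInvOn_invFunOn hx]
  refine Set.LeftInvOn.injOn (f₁' := FreeGroup.map (Function.invFunOn r s)) fun w hw ↦ ?_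
  rw [FreeGroup.map.comp]
  exact hleft hw

universe u in
theorem exists_freeGroup_map_injOn {α : Type u} {D : Set (FreeGroup α)} (hD : D.Finite) :
    ∃ (ι : Type u) (_ : Finite ι) (_ : Nontrivial ι) (r : α → ι),
      Set.InjOn (FreeGroup.map r) D := by
  classical
  obtain ⟨_, hts, ht, hDt⟩ := exists_finite_subset_closure (s := FreeGroup.of '' Set.univ) hD
    (by simp [FreeGroup.closure_range_of])
  obtain ⟨s, -, rfl⟩ := Set.subset_image_iff.1 hts
  have hs : Finite s := (Set.finite_image_iff FreeGroup.of_injective.injOn).1 ht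
  let r (x : α) : s ⊕ Bool := if hx : x ∈ s then .inl ⟨x, hx⟩ else .inr true
  have hr : Set.InjOn r s := fun x hx y hy hxy ↦ by simpa [r, hx, hy] using hxy
  exact ⟨s ⊕ Bool, inferInstance, Sum.inr_injective.nontrivial, r,
    (freeGroup_map_injOn_closure hr).mono hDt⟩

theorem isPowPotent_freeGroup {α : Type*} {a : FreeGroup α} (ha : a ≠ 1) {D : Set (FreeGroup α)}
    (hD : D.Finite) (h1 : 1 ∉ D) : IsPowPotent p a D := by
  obtain ⟨ι, _, _, r, hr⟩ := exists_freeGroup_map_injOn ((hD.insert a).insert 1)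
  have hr1 {x} (hx : x ∈ insert 1 (insert a D)) (h : FreeGroup.map r x = 1) : x = 1 :=
    hr hx (Set.mem_insert _ _) (h.trans (map_one _).symm)
  refine .of_map (FreeGroup.map r) <|
    isPowPotent_freeGroup_of_finite (fun h ↦ ha (hr1 (by simp) h)) (hD.image _) ?_
  rintro ⟨d, hd, hd1⟩
  exact h1 (hr1 (by simp [hd]) hd1 ▸ hd)

end FreeGroupPotency

section Centralizer

variable {G : Type*} [Group G] [IsFreeGroup G]

theorem freeGroup_of_commute_iff {α : Type*} {x y : α} :
    Commute (FreeGroup.of x) (FreeGroup.of y) ↔ x = y := by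
  classical
  refine ⟨fun h ↦ ?_, fun h ↦ h ▸ .refl _⟩
  have hword := congrArg FreeGroup.toWord h
  exact (by simpa [FreeGroup.toWord_mul] using hword : x = y ∧ y = x).1

instance isCyclic_freeGroup_of_subsingleton {α : Type*} [Subsingleton α] :
    IsCyclic (FreeGroup α) := by
  cases isEmpty_or_nonempty α
  · exact isCyclic_of_subsingleton
  · obtain ⟨x⟩ := ‹Nonempty α›
    rw [isCyclic_iff_exists_zpowers_eq_top]
    refine ⟨.of x, ?_⟩
    rw [eq_top_iff, ← FreeGroup.closure_range_of, closure_le]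
    rintro _ ⟨y, rfl⟩
    exact Subsingleton.elim x y ▸ mem_zpowers _

theorem isCyclic_of_isFreeGroup_of_isMulCommutative [IsMulCommutative G] : IsCyclic G := by
  have hcomm (x y : FreeGroup (IsFreeGroup.Generators G)) : Commute x y :=
    (IsFreeGroup.mulEquiv G).injective <| by simpa using mul_comm' _ _
  have : Subsingleton (IsFreeGroup.Generators G) :=
    ⟨fun x y ↦ freeGroup_of_commute_iff.1 (hcomm (.of x) (.of y))⟩
  exact isCyclic_of_surjective _ (IsFreeGroup.mulEquiv G).surjective

theorem exists_mem_zpowers_of_commute {x y : G} (h : Commute x y) :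
    ∃ z, x ∈ zpowers z ∧ y ∈ zpowers z := by
  have : IsMulCommutative (closure {x, y}) := by
    refine isMulCommutative_closure ?_
    rintro _ (rfl | rfl) _ (rfl | rfl)
    exacts [rfl, h, h.symm, rfl]
  obtain ⟨z, hz⟩ := (isCyclic_of_isFreeGroup_of_isMulCommutative (G := closure {x, y}))
  have hmem (w) (hw : w ∈ closure {x, y}) : w ∈ zpowers (z : G) := by
    obtain ⟨k, hk⟩ := hz ⟨w, hw⟩
    exact ⟨k, congrArg Subtype.val hk⟩
  exact ⟨z, hmem x (subset_closure (by simp)), hmem y (subset_closure (by simp))⟩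

end Centralizer

section NotProperPower

theorem NotProperPower.ne_one {G : Type} [Group G] {a : G} (ha : NotProperPower a) : a ≠ 1 := by
  rintro rfl
  simpa using ha 1 2 (by simp)

theorem NotProperPower.mem_zpowers_of_commute {G : Type} [Group G] [IsFreeGroup G] {a x : G}
    (ha : NotProperPower a) (h : Commute x a) : x ∈ zpowers a := by
  obtain ⟨z, hx, k, hk⟩ := exists_mem_zpowers_of_commute h
  dsimp only at hk
  have hk1 := ha z k hk.symm
  have : k = 0 ∨ k = 1 ∨ k = -1 := by lia
  obtain rfl | rfl | rfl := this
  · exact absurd (by simpa using hk.symm) ha.ne_one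
  · simpa [← hk] using hx
  · simpa [← hk] using hx

theorem NotProperPower.eventually_separated {p : ℕ} [Fact p.Prime] {α : Type} {a : FreeGroup α}
    (ha : NotProperPower a) {D : Set (FreeGroup α)} (hD : D.Finite) :
    ∀ᶠ s in atTop, ∃ N : FiniteIndexNormalSubgroup (FreeGroup α),
      orderOf (QuotientGroup.mk' N.toSubgroup a) = p ^ s ∧
      ∀ x ∈ D, (x ≠ 1 → QuotientGroup.mk' N.toSubgroup x ≠ 1) ∧
        (x ∉ zpowers a → QuotientGroup.mk' N.toSubgroup x ∉
          zpowers (QuotientGroup.mk' N.toSubgroup a)) := by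
  have hfin : ((D ∪ (⁅·, a⁆) '' D) \ {1}).Finite := (hD.union (hD.image _)).sdiff
  filter_upwards [isPowPotent_freeGroup (p := p) ha.ne_one hfin (by simp)] with s ⟨N, horder, hdisj⟩
  have hker {y} (hy : y ∈ D ∪ (⁅·, a⁆) '' D) (hy1 : y ≠ 1) :
      QuotientGroup.mk' N.toSubgroup y ≠ 1 := fun h ↦
    Set.disjoint_left.1 hdisj ⟨hy, hy1⟩ ((QuotientGroup.eq_one_iff y).1 h)
  refine ⟨N, horder, fun x hx ↦ ⟨hker (.inl hx), fun hxa hmem ↦ ?_⟩⟩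
  have hcomm : ⁅x, a⁆ ≠ 1 := fun h ↦
    hxa (ha.mem_zpowers_of_commute (commutatorElement_eq_one_iff_commute.1 h))
  refine hker (.inr ⟨x, hx, rfl⟩) hcomm ?_
  rw [map_commutatorElement, commutatorElement_eq_one_iff_commute]
  obtain ⟨k, hk⟩ := hmem
  exact hk ▸ (Commute.refl _).zpow_left k

end NotProperPower

theorem stmt9_general {α β : Type} {a : FreeGroup α} {b : FreeGroup β} (ha : NotProperPower a)
    (hb : NotProperPower b) {D : Set (FreeGroup α)} {E : Set (FreeGroup β)} (hD : D.Finite)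
    (hE : E.Finite) :
    ∃ (P : Type) (_ : Group P) (_ : Finite P) (φ : FreeGroup α →* P)
      (Q : Type) (_ : Group Q) (_ : Finite Q) (ψ : FreeGroup β →* Q),
      Function.Surjective φ ∧ Function.Surjective ψ ∧
      orderOf (φ a) = orderOf (ψ b) ∧ 1 < orderOf (φ a) ∧
      (∀ x ∈ D, (x ≠ 1 → φ x ≠ 1) ∧ (x ∉ zpowers a → φ x ∉ zpowers (φ a))) ∧
      (∀ y ∈ E, (y ≠ 1 → ψ y ≠ 1) ∧ (y ∉ zpowers b → ψ y ∉ zpowers (ψ b))) := by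
  obtain ⟨s, ⟨⟨M, hM, hMD⟩, N, hN, hNE⟩, hs⟩ := ((ha.eventually_separated (p := 2) hD).and
    (hb.eventually_separated (p := 2) hE)).and (eventually_gt_atTop 0) |>.exists
  exact ⟨_, inferInstance, finite_quotient_of_finiteIndex, QuotientGroup.mk' M.toSubgroup,
    _, inferInstance, finite_quotient_of_finiteIndex, QuotientGroup.mk' N.toSubgroup,
    QuotientGroup.mk'_surjective _, QuotientGroup.mk'_surjective _, hM.trans hN.symm,
    hM ▸ Nat.one_lt_two_pow hs.ne', hMD, hNE⟩

instance finite_setOf_exists_eq₂ {ι κ X : Type*} [Finite ι] [Finite κ] (f : ι → κ → X) :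
    Finite {x | ∃ i k, x = f i k} :=
  (Set.finite_range fun ik : ι × κ ↦ f ik.1 ik.2).subset <| by
    rintro _ ⟨i, k, rfl⟩
    exact ⟨(i, k), rfl⟩

theorem stmt9 {α β : Type} (a : FreeGroup α) (b : FreeGroup β)
    (ha : a ≠ 1) (hb : b ≠ 1) (hpa : NotProperPower a) (hpb : NotProperPower b)
    (n m : ℕ) (hn : 0 < n)
    (A : Fin n → FreeGroup α) (B : Fin n → FreeGroup β)
    (A' : Fin m → FreeGroup α) (B' : Fin m → FreeGroup β)
    (hA : ∀ i, A i ∉ zpowers a) (hA' : ∀ j, A' j ∉ zpowers a)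
    (hB : ∀ i, B i ∉ zpowers b) (hB' : ∀ j, B' j ∉ zpowers b)
    (q : FreeGroup α) (hq : q ∈ zpowers a) (hq1 : q ≠ 1) :
    ∃ (P : Type) (_ : Group P) (_ : Finite P) (φ : FreeGroup α →* P)
      (Q : Type) (_ : Group Q) (_ : Finite Q) (ψ : FreeGroup β →* Q),
      Function.Surjective φ ∧ Function.Surjective ψ ∧
      orderOf (φ a) = orderOf (ψ b) ∧ 1 < orderOf (φ a) ∧
      (∀ x ∈ ({(A ⟨0, hn⟩)⁻¹ * q * A ⟨0, hn⟩} ∪ Set.range A ∪ Set.range A' ∪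
          {x | ∃ i k, x = A i * (A k)⁻¹} ∪ {x | ∃ j l, x = A' j * (A' l)⁻¹} ∪
          {x | ∃ i j, x = A i * (A' j)⁻¹} : Set (FreeGroup α)),
        (x ≠ 1 → φ x ≠ 1) ∧ (x ∉ zpowers a → φ x ∉ zpowers (φ a))) ∧
      (∀ y ∈ (Set.range B ∪ Set.range B' ∪
          {y | ∃ i k, y = B i * (B k)⁻¹} ∪ {y | ∃ j l, y = B' j * (B' l)⁻¹} ∪
          {y | ∃ i j, y = B i * (B' j)⁻¹} : Set (FreeGroup β)),
        (y ≠ 1 → ψ y ≠ 1) ∧ (y ∉ zpowers b → ψ y ∉ zpowers (ψ b))) :=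
  stmt9_general hpa hpb (Set.toFinite _) (Set.toFinite _)
end

section
/- Let F₁, F₂ be free groups, a ∈ F₁ \ {1}, b ∈ F₂ \ {1}, and set G = F₁ *_{a=b} F₂. If u, v ∈ F₁ are elements such that u is not conjugate in F₁ to v or v⁻¹, then there exists a homomorphism of G onto a finite group under which the images of u and v have different orders. -/
open Monoid Subgroup

def fam (α β : Type) : Bool → Type
  | true => FreeGroup α
  | false => FreeGroup β

instance famGroup (α β : Type) : ∀ i : Bool, Group (fam α β i)
  | true => inferInstanceAs (Group (FreeGroup α))
  | false => inferInstanceAs (Group (FreeGroup β))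

/-- The maps from the infinite cyclic group `FreeGroup Unit` sending the
generator to `a` resp. `b`; their pushout is `F₁ *_{a=b} F₂`. -/
def amalMaps {α β : Type} (a : FreeGroup α) (b : FreeGroup β) :
    ∀ i : Bool, FreeGroup Unit →* fam α β i
  | true => FreeGroup.lift fun _ => a
  | false => FreeGroup.lift fun _ => b

/-!
A nontrivial element of a free group survives in a group of unitriangular integer matrices. Cutting
such a matrix down to a minimal interval of indices on which it is not the identity leaves a
transvection, and reducing modulo an integer gives the image any prescribed finite order: free
groups are potent. If a conjugate of `u` and `v` are powers of one element `w` with exponents of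
different absolute values, they are separated by prescribing the order of `w`.

Otherwise `u` and `v` are conjugate to powers of root words `U` and `V` no conjugates of whose
powers commute. In the Cayley graph of a sufficiently large finite quotient, powers of `U` and `V`
read simple loops, and no loop of `U` stays in the set `C` of vertices on the loop of `V` at `1`.
Label the edges by the affine group `ZMod p ⋊ (ZMod p)ˣ`: one edge of the loop of `V` by the
translation by `1`, and every other edge `e` by `ζ ^ c e`, where the weights `c` vanish inside `C`
and have nonzero sum along every loop of `U`. For a large prime `p` and `ζ` a generator, every loop
of `U` has a nontrivial linear part, hence order dividing `p - 1`, whereas the loop of `V` has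
order `p`. In the wreath product these labels define, `p` divides the order of `v` but not that
of `u`.

Finally, if `u` and `v` have different orders in a finite quotient of `F₁`, potency of `b` provides
a finite quotient of `F₂` in which `b` has the order of `a`. Both quotients act freely on their
product, where `a` and `b` become conjugate permutations, so the two actions can be made to agree on
`a = b`.
-/

/-! ### Potency of free groups -/

/-- `g` is potent in `G` if every positive integer is the order of the image of `g` in some
finite quotient of `G`. -/
def IsPotentElement {G : Type*} [Group G] (g : G) : Prop :=
  ∀ n, 0 < n → ∃ N : FiniteIndexNormalSubgroup G, orderOf (g : G ⧸ N.toSubgroup) = n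

theorem exists_finiteIndexNormalSubgroup_orderOf_eq {G Q : Type*} [Group G] [Group Q] [Finite Q]
    (φ : G →* Q) :
    ∃ N : FiniteIndexNormalSubgroup G, ∀ g : G, orderOf (g : G ⧸ N.toSubgroup) = orderOf (φ g) :=
  ⟨.ofSubgroup φ.ker, fun g =>
    (orderOf_injective _ (QuotientGroup.kerLift_injective φ) g).symm⟩

section Unitriangular

variable {n R : Type*} [LinearOrder n] [Fintype n] [CommRing R]

variable (n R) in
/-- The monoid of upper unitriangular matrices. -/
def unitriangular : Submonoid (Matrix n n R) where
  carrier := {A | A.IsUpperTriangular ∧ ∀ i, A i i = 1}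
  one_mem' := ⟨Matrix.blockTriangular_one, Matrix.one_apply_eq⟩
  mul_mem' {A B} hA hB := by
    refine ⟨hA.1.mul hB.1, fun i => ?_⟩
    rw [Matrix.mul_apply, Finset.sum_eq_single i, hA.2, hB.2, one_mul]
    · intro m _ hm
      rcases hm.lt_or_gt with h | h
      · rw [hA.1 h, zero_mul]
      · rw [hB.1 h, mul_zero]
    · simp

/-- Restriction of unitriangular matrices to the rows and columns in an interval; it is
multiplicative because upper triangular matrices preserve the filtration by initial segments. -/
def unitriangularToIcc (i j : n) :
    unitriangular n R →* Matrix (Set.Icc i j) (Set.Icc i j) R where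
  toFun A := A.1.submatrix (↑) (↑)
  map_one' := Matrix.submatrix_one _ Subtype.val_injective
  map_mul' A B := by
    ext k l
    refine (Fintype.sum_of_injective _ Subtype.val_injective _ _ (fun m hm => ?_)
      fun _ => rfl).symm
    change A.1 k m * B.1 m l = 0
    rcases lt_or_ge m i with hi | hi
    · rw [A.2.1 (show m < k from hi.trans_le k.2.1), zero_mul]
    · have hj : j < m := lt_of_not_ge fun hj => hm ⟨⟨m, hi, hj⟩, rfl⟩
      rw [B.2.1 (show (l : n) < m from l.2.2.trans_lt hj), mul_zero]

theorem exists_minimal_entry_ne_zero {A : unitriangular n R} (hA : A ≠ 1) :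
    ∃ i j, i < j ∧ A.1 i j ≠ 0 ∧
      ∀ k ∈ Set.Icc i j, ∀ l ∈ Set.Icc i j, k < l → A.1 k l ≠ 0 → k = i ∧ l = j := by
  let S : Set (n × n) := {p | p.1 < p.2 ∧ A.1 p.1 p.2 ≠ 0}
  have hS : S.Nonempty := by
    by_contra! hS
    refine hA (Subtype.ext (Matrix.ext fun i j => ?_))
    rcases lt_trichotomy i j with h | rfl | h
    · have : (i, j) ∉ S := hS ▸ Set.notMem_empty _
      simpa [S, h, Matrix.one_apply_ne h.ne] using this
    · simp [A.2.2]
    · simp [A.2.1 h, Matrix.one_apply_ne h.ne']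
  obtain ⟨⟨i, j⟩, ⟨hij : i < j, hε⟩, hmin⟩ :=
    S.toFinite.exists_minimalFor (fun p => Set.Icc p.1 p.2) S hS
  refine ⟨i, j, hij, hε, fun k hk l hl hkl hne => ?_⟩
  have hle := (Set.Icc_subset_Icc_iff hij.le).1
    (hmin (j := (k, l)) ⟨hkl, hne⟩ (Set.Icc_subset_Icc hk.1 hl.2))
  exact ⟨hle.1.antisymm hk.1, hl.2.antisymm hle.2⟩

theorem exists_unitriangularToIcc_eq_transvection {A : unitriangular n R} (hA : A ≠ 1) :
    ∃ (i j : n) (a b : Set.Icc i j) (ε : R), a ≠ b ∧ ε ≠ 0 ∧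
      unitriangularToIcc i j A = Matrix.transvection a b ε := by
  obtain ⟨i, j, hij, hε, hmin⟩ := exists_minimal_entry_ne_zero hA
  refine ⟨i, j, ⟨i, le_rfl, hij.le⟩, ⟨j, hij.le, le_rfl⟩, A.1 i j,
    fun h => hij.ne (congrArg Subtype.val h), hε, ?_⟩
  ext ⟨k, hk⟩ ⟨l, hl⟩
  have hdiag := A.2.2 k
  have hlower : l < k → A.1 k l = 0 := fun h => A.2.1 h
  simp only [unitriangularToIcc, MonoidHom.coe_mk, OneHom.coe_mk, Matrix.submatrix_apply,
    Matrix.transvection, Matrix.add_apply, Matrix.one_apply, Matrix.single_apply,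
    Subtype.ext_iff]
  grind

theorem orderOf_transvection {n R : Type*} [DecidableEq n] [Fintype n] [CommRing R] {i j : n}
    (hij : i ≠ j) (c : R) : orderOf (Matrix.transvection i j c) = addOrderOf c := by
  let T : Multiplicative R →* Matrix n n R :=
    { toFun c := Matrix.transvection i j c.toAdd
      map_one' := Matrix.transvection_zero i j
      map_mul' c d := (Matrix.transvection_mul_transvection_same i j hij _ _).symm }
  have hT : Function.Injective T := fun c d h => by
    simpa [T, Matrix.transvection, hij] using congrFun (congrFun h i) j
  exact (orderOf_injective T hT (.ofAdd c)).trans (orderOf_ofAdd_eq_addOrderOf c)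

theorem addOrderOf_intCast_zmod_mul_natAbs {m : ℕ} {ε : ℤ} (hm : 0 < m) (hε : ε ≠ 0) :
    addOrderOf (ε : ZMod (m * ε.natAbs)) = m := by
  have hpos : 0 < ε.natAbs := Int.natAbs_pos.2 hε
  have h : addOrderOf (ε.natAbs : ZMod (m * ε.natAbs)) = m := by
    rw [ZMod.addOrderOf_coe _ (by positivity), Nat.gcd_eq_right (Nat.dvd_mul_left _ _),
      Nat.mul_div_cancel _ hpos]
  rcases abs_choice ε with h' | h' <;>
    simpa only [Nat.cast_natAbs, h', Int.cast_neg, addOrderOf_neg] using h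

theorem isPotentElement_of_unitriangular {G n : Type*} [Group G] [LinearOrder n] [Fintype n]
    (ρ : G →* unitriangular n ℤ) {g : G} (hg : ρ g ≠ 1) : IsPotentElement g := by
  intro m hm
  obtain ⟨i, j, a, b, ε, hab, hε, hA⟩ := exists_unitriangularToIcc_eq_transvection hg
  have : NeZero (m * ε.natAbs) := ⟨mul_ne_zero hm.ne' (Int.natAbs_ne_zero.2 hε)⟩
  let red := (Int.castRingHom (ZMod (m * ε.natAbs))).mapMatrix (m := Set.Icc i j)
  let φ := (red.toMonoidHom.comp ((unitriangularToIcc i j).comp ρ)).toHomUnits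
  obtain ⟨N, hN⟩ := exists_finiteIndexNormalSubgroup_orderOf_eq φ
  refine ⟨N, (hN g).trans ?_⟩
  have hφ : (φ g : Matrix (Set.Icc i j) (Set.Icc i j) (ZMod (m * ε.natAbs))) =
      Matrix.transvection a b (ε : ZMod (m * ε.natAbs)) := by
    change red (unitriangularToIcc i j (ρ g)) = _
    rw [hA, Matrix.transvection, map_add, map_one]
    exact congrArg _ (Matrix.map_single a b ε _)
  rw [← orderOf_units, hφ, orderOf_transvection hab, addOrderOf_intCast_zmod_mul_natAbs hm hε]

end Unitriangular

section Shift

variable {k : ℕ}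

/-- The matrix with ones at the superdiagonal positions `(t, t + 1)`, `t ∈ S`. -/
def shiftMatrix (S : Finset (Fin k)) : Matrix (Fin (k + 1)) (Fin (k + 1)) ℤ :=
  ∑ t ∈ S, Matrix.single t.castSucc t.succ 1

theorem shiftMatrix_mul_self {S : Finset (Fin k)}
    (hS : ∀ s ∈ S, ∀ t ∈ S, s.succ ≠ t.castSucc) : shiftMatrix S * shiftMatrix S = 0 := by
  simp only [shiftMatrix, Finset.sum_mul_sum]
  exact Finset.sum_eq_zero fun s hs => Finset.sum_eq_zero fun t ht =>
    Matrix.single_mul_single_of_ne _ _ _ _ (hS s hs t ht) _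

theorem mul_shiftMatrix_apply_succ {m : Type*} (A : Matrix m (Fin (k + 1)) ℤ) (S : Finset (Fin k))
    (i : m) (t : Fin k) :
    (A * shiftMatrix S) i t.succ = if t ∈ S then A i t.castSucc else 0 := by
  have hterm (s : Fin k) : (A * Matrix.single s.castSucc s.succ (1 : ℤ)) i t.succ =
      if t = s then A i s.castSucc else 0 := by
    split_ifs with h
    · rw [h, Matrix.mul_single_apply_same, mul_one]
    · exact Matrix.mul_single_apply_of_ne _ _ _ _ _ (mt (Fin.succ_injective k ·) h) _
  rw [shiftMatrix, Matrix.mul_sum, Matrix.sum_apply]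
  exact (Finset.sum_congr rfl fun s _ => hterm s).trans (Finset.sum_ite_eq ..)

theorem one_add_smul_shiftMatrix_mem_unitriangular (S : Finset (Fin k)) (e : ℤ) :
    1 + e • shiftMatrix S ∈ unitriangular (Fin (k + 1)) ℤ := by
  have h : ∀ i j, j ≤ i → (e • shiftMatrix S) i j = 0 := by
    intro i j hji
    rw [Matrix.smul_apply, shiftMatrix, Matrix.sum_apply, Finset.sum_eq_zero, smul_zero]
    refine fun t _ => Matrix.single_apply_of_ne _ _ _ _ _ ?_
    rintro ⟨rfl, rfl⟩
    exact (Fin.castSucc_lt_succ).not_ge hji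
  exact ⟨fun i j (hji : j < i) => by
      rw [Matrix.add_apply, h i j hji.le, Matrix.one_apply_ne hji.ne', add_zero],
    fun i => by rw [Matrix.add_apply, h i i le_rfl, Matrix.one_apply_eq, add_zero]⟩

theorem partialProd_one_add_smul_shiftMatrix {S : Fin k → Finset (Fin k)} (hS : ∀ t, t ∈ S t)
    {e : Fin k → ℤ} (he : ∀ t, e t ≠ 0) (t : Fin (k + 1)) :
    Fin.partialProd (fun s => 1 + e s • shiftMatrix (S s)) t 0 t ≠ 0 ∧
      ∀ s > t, Fin.partialProd (fun s => 1 + e s • shiftMatrix (S s)) t 0 s = 0 := by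
  induction t using Fin.induction with
  | zero =>
    rw [Fin.partialProd_zero]
    exact ⟨one_ne_zero, fun s hs => Matrix.one_apply_ne hs.ne⟩
  | succ t ih =>
    obtain ⟨ih₁, ih₂⟩ := ih
    rw [Fin.partialProd_succ]
    generalize Fin.partialProd (fun s => 1 + e s • shiftMatrix (S s)) t.castSucc = A at ih₁ ih₂
    have hentry (s : Fin k) : (A * (1 + e t • shiftMatrix (S t))) 0 s.succ =
        A 0 s.succ + e t * if s ∈ S t then A 0 s.castSucc else 0 := by
      rw [mul_add, mul_one, Matrix.mul_smul, Matrix.add_apply, Matrix.smul_apply,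
        mul_shiftMatrix_apply_succ, smul_eq_mul]
    constructor
    · rw [hentry, ih₂ _ Fin.castSucc_lt_succ, if_pos (hS t), zero_add]
      exact mul_ne_zero (he t) ih₁
    · intro s hs
      obtain ⟨s, rfl⟩ := Fin.exists_succ_eq.2 (Fin.ne_zero_of_lt hs)
      have hts : t < s := Fin.succ_lt_succ_iff.1 hs
      rw [hentry, ih₂ _ (Fin.castSucc_lt_succ.trans hs), ih₂ _ (Fin.castSucc_lt_castSucc_iff.2 hts)]
      simp

end Shift

/-- The homomorphism `e ↦ 1 + e • N` attached to an element `N` of square zero. -/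
def oneAddSMulHom {R : Type*} [Ring R] (N : R) (hN : N * N = 0) : Multiplicative ℤ →* R where
  toFun e := 1 + e.toAdd • N
  map_one' := by simp
  map_mul' d e := by
    simp only [toAdd_mul, add_smul, mul_add, add_mul, smul_mul_smul_comm, hN, smul_zero, one_mul,
      mul_one, add_zero, add_assoc]

section FreeGroupPotent

variable {α : Type*}

theorem exists_unitriangular_rep {k : ℕ} (S : α → Finset (Fin k))
    (hS : ∀ x, ∀ s ∈ S x, ∀ t ∈ S x, s.succ ≠ t.castSucc) :
    ∃ ρ : FreeGroup α →* unitriangular (Fin (k + 1)) ℤ,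
      ∀ (x : α) (e : ℤ), (ρ (FreeGroup.of x ^ e) : Matrix (Fin (k + 1)) (Fin (k + 1)) ℤ) =
        1 + e • shiftMatrix (S x) := by
  let T (x : α) : Multiplicative ℤ →* unitriangular (Fin (k + 1)) ℤ :=
    (oneAddSMulHom _ (shiftMatrix_mul_self (hS x))).codRestrict _
      fun e => one_add_smul_shiftMatrix_mem_unitriangular _ e.toAdd
  refine ⟨(Units.coeHom _).comp (FreeGroup.lift fun x => (T x).toHomUnits (.ofAdd 1)),
    fun x e => ?_⟩
  rw [MonoidHom.comp_apply, map_zpow, FreeGroup.lift_apply_of, ← map_zpow, ← ofAdd_zsmul,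
    smul_eq_mul, mul_one]
  rfl

theorem freeGroup_exists_syllables (g : FreeGroup α) :
    ∃ l : List (α × ℤ), l.IsChain (fun p q => p.1 ≠ q.1) ∧ (∀ p ∈ l, p.2 ≠ 0) ∧
      g = (l.map fun p => FreeGroup.of p.1 ^ p.2).prod := by
  classical
  let W := CoprodI.Word.equiv (freeGroupEquivCoprodI g)
  have hW : W.prod = freeGroupEquivCoprodI g := CoprodI.Word.equiv.symm_apply_apply _
  have hunit (m : FreeGroup Unit) : FreeGroup.of () ^ FreeGroup.freeGroupUnitEquivInt m = m :=
    FreeGroup.freeGroupUnitEquivInt.symm_apply_apply m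
  refine ⟨W.toList.map fun p => (p.1, FreeGroup.freeGroupUnitEquivInt p.2),
    (List.isChain_map _).2 W.chain_ne, ?_, freeGroupEquivCoprodI.injective ?_⟩
  · simp only [List.mem_map, forall_exists_index, and_imp, forall_apply_eq_imp_iff₂]
    intro p hp h
    exact W.ne_one p hp (by rw [← hunit p.2, h, zpow_zero])
  · rw [← hW, CoprodI.Word.prod, map_list_prod, List.map_map, List.map_map]
    refine congrArg _ (List.map_congr_left fun p _ => ?_)
    simp only [Function.comp, map_zpow, freeGroupEquivCoprodI_apply, FreeGroup.lift_apply_of]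
    rw [← map_zpow, hunit]

theorem isPotentElement_freeGroup {g : FreeGroup α} (hg : g ≠ 1) : IsPotentElement g := by
  classical
  obtain ⟨l, hchain, hexp, rfl⟩ := freeGroup_exists_syllables g
  let S (x : α) : Finset (Fin l.length) := Finset.univ.filter fun t => l[t].1 = x
  have hS : ∀ x, ∀ s ∈ S x, ∀ t ∈ S x, s.succ ≠ t.castSucc := by
    simp only [S, Finset.mem_filter_univ]
    rintro x s rfl t ht hst
    have hts : s + 1 = (t : ℕ) := congrArg Fin.val hst
    refine List.isChain_iff_getElem.1 hchain s (by omega) ?_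
    simp only [hts]
    exact ht.symm
  obtain ⟨ρ, hρ⟩ := exists_unitriangular_rep S hS
  refine isPotentElement_of_unitriangular ρ fun h1 => ?_
  have hprod : ρ (l.map fun p => FreeGroup.of p.1 ^ p.2).prod =
      Fin.partialProd (fun t : Fin l.length => 1 + l[t].2 • shiftMatrix (S l[t].1))
        (Fin.last _) := by
    rw [map_list_prod, Submonoid.coe_list_prod, List.map_map, List.map_map]
    rw [Fin.partialProd, Fin.val_last, List.take_of_length_le (List.length_ofFn ..).le]
    simp only [Function.comp_def, hρ]
    exact congrArg _ (List.ofFn_getElem_eq_map l fun p => 1 + p.2 • shiftMatrix (S p.1)).symm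
  have hcorner := (partialProd_one_add_smul_shiftMatrix (S := fun t => S l[t].1) (by simp [S])
    (e := fun t => l[t].2) (fun t => hexp _ (l.getElem_mem t.2)) (Fin.last _)).1
  rw [← hprod, h1] at hcorner
  refine hcorner (Matrix.one_apply_ne fun h => hg ?_)
  have : l = [] := by simpa using congrArg Fin.val h.symm
  simp [this]

end FreeGroupPotent

theorem IsPotentElement.exists_notMem {G : Type*} [Group G] {g : G} (hg : IsPotentElement g) :
    ∃ N : FiniteIndexNormalSubgroup G, g ∉ N := by
  obtain ⟨N, hN⟩ := hg 2 two_pos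
  refine ⟨N, fun h => ?_⟩
  rw [(QuotientGroup.eq_one_iff g).2 h, orderOf_one] at hN
  omega

instance residuallyFinite_freeGroup (α : Type*) : Group.ResiduallyFinite (FreeGroup α) :=
  Group.residuallyFinite_iff_exists_finiteIndexNormalSubgroup.2 fun _ hg =>
    (isPotentElement_freeGroup hg).exists_notMem

theorem exists_finiteIndexNormalSubgroup_forall_notMem {G : Type*} [Group G]
    [Group.ResiduallyFinite G] {S : Set G} (hS : S.Finite) (h1 : 1 ∉ S) :
    ∃ N : FiniteIndexNormalSubgroup G, ∀ s ∈ S, s ∉ N := by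
  induction S, hS using Set.Finite.induction_on with
  | empty => exact ⟨.ofSubgroup ⊤, fun s hs => hs.elim⟩
  | @insert s S _ _ ih =>
    obtain ⟨hs, hS⟩ := not_or.1 h1
    obtain ⟨M, hM⟩ := Group.exists_finiteIndexNormalSubgroup_notMem s (Ne.symm hs)
    obtain ⟨N, hN⟩ := ih hS
    refine ⟨M ⊓ N, fun t ht h => ?_⟩
    rcases ht with rfl | ht
    · exact hM (inf_le_left (a := M) h)
    · exact hN t ht (inf_le_right (b := N) h)

open scoped commutatorElement in
theorem exists_finiteIndexNormalSubgroup_forall_commute {G : Type*} [Group G]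
    [Group.ResiduallyFinite G] {S : Set (G × G)} (hS : S.Finite) :
    ∃ N : FiniteIndexNormalSubgroup G, ∀ p ∈ S,
      Commute (p.1 : G ⧸ N.toSubgroup) (p.2 : G ⧸ N.toSubgroup) → Commute p.1 p.2 := by
  obtain ⟨N, hN⟩ := exists_finiteIndexNormalSubgroup_forall_notMem
    ((hS.image fun p => ⁅p.1, p.2⁆).sdiff (t := {1})) (by simp)
  refine ⟨N, fun p hp h => ?_⟩
  by_contra hne
  refine hN ⁅p.1, p.2⁆ ⟨⟨p, hp, rfl⟩, mt commutatorElement_eq_one_iff_commute.1 hne⟩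
    ((QuotientGroup.eq_one_iff _).1 ?_)
  exact commutatorElement_eq_one_iff_commute.2 h

/-! ### Root words -/

section FreeGroupCentralizers

variable {α : Type*}

theorem center_freeGroup_eq_bot [Nontrivial α] : center (FreeGroup α) = ⊥ := by
  classical
  refine (Subgroup.eq_bot_iff_forall _).2 fun z hz => by_contra fun hne => ?_
  have hw : z.toWord ≠ [] := fun h => hne (FreeGroup.toWord_eq_nil_iff.1 h)
  obtain ⟨a, L, hL⟩ := List.exists_cons_of_ne_nil hw
  obtain ⟨x, hx⟩ := exists_ne a.1
  let ε := (z.toWord.getLast hw).2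
  have hred : FreeGroup.IsReduced z.toWord := FreeGroup.isReduced_toWord
  have hleft : FreeGroup.IsReduced ((x, ε) :: z.toWord) := by
    rw [hL, FreeGroup.isReduced_cons_cons, ← hL]
    exact ⟨fun h => absurd h hx, hred⟩
  have hright : FreeGroup.IsReduced (z.toWord ++ [(x, ε)]) := by
    refine List.isChain_append.2 ⟨hred, FreeGroup.IsReduced.singleton, ?_⟩
    simp [List.getLast?_eq_some_getLast hw, ε]
  have hcomm : FreeGroup.mk ((x, ε) :: z.toWord) = FreeGroup.mk (z.toWord ++ [(x, ε)]) := by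
    rw [← FreeGroup.mul_mk, ← List.singleton_append, ← FreeGroup.mul_mk, FreeGroup.mk_toWord]
    exact mem_center_iff.1 hz _
  have hwords := FreeGroup.reduce.sound hcomm
  rw [hleft.reduce_eq, hright.reduce_eq, hL] at hwords
  exact hx (congrArg Prod.fst (List.cons.inj hwords).1)

theorem isCyclic_of_center_ne_bot {G : Type*} [Group G] [IsFreeGroup G]
    (h : center G ≠ ⊥) : IsCyclic G := by
  let e := IsFreeGroup.mulEquiv G
  have : Subsingleton (IsFreeGroup.Generators G) := by
    by_contra hX
    rw [not_subsingleton_iff_nontrivial] at hX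
    have : Subsingleton (center G) :=
      (centerCongr e).toEquiv.subsingleton_congr.1 (by rw [center_freeGroup_eq_bot]; infer_instance)
    exact h (Subgroup.eq_bot_of_subsingleton _)
  have : IsCyclic (FreeGroup (IsFreeGroup.Generators G)) := by
    rcases isEmpty_or_nonempty (IsFreeGroup.Generators G) with _ | ⟨⟨x⟩⟩
    · infer_instance
    · have : Unique (IsFreeGroup.Generators G) := ⟨⟨x⟩, fun y => Subsingleton.elim _ _⟩
      infer_instance
  exact e.isCyclic.1 this

theorem isCyclic_centralizer_freeGroup {z : FreeGroup α} (hz : z ≠ 1) :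
    IsCyclic (centralizer {z}) := by
  have : IsFreeGroup (centralizer {z}) := subgroupIsFreeOfIsFree _
  refine isCyclic_of_center_ne_bot fun h => hz ?_
  have hmem : (⟨z, mem_centralizer_singleton_iff.2 rfl⟩ : centralizer {z}) ∈
      center (centralizer {z}) :=
    mem_center_iff.2 fun x => Subtype.ext (mem_centralizer_singleton_iff.1 x.2)
  rw [h, mem_bot] at hmem
  exact congrArg Subtype.val hmem

/-- A root word is a nonempty cyclically reduced word whose class in the free group generates its
own centralizer, and hence is not a proper power. -/
structure IsRootWord (L : List (α × Bool)) : Prop where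
  ne_nil : L ≠ []
  isCyclicallyReduced : FreeGroup.IsCyclicallyReduced L
  mem_zpowers_of_commute :
    ∀ x : FreeGroup α, Commute x (FreeGroup.mk L) → x ∈ zpowers (FreeGroup.mk L)

theorem freeGroup_exists_zpow_eq_and_commute {u : FreeGroup α} (hu : u ≠ 1) :
    ∃ (w : FreeGroup α) (k : ℤ), k ≠ 0 ∧ u = w ^ k ∧ ∀ x, Commute x w → x ∈ zpowers w := by
  obtain ⟨⟨w, hw⟩, hgen⟩ := (isCyclic_centralizer_freeGroup hu).exists_generator
  have hmem (x : FreeGroup α) (hx : Commute x u) : x ∈ zpowers w := by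
    obtain ⟨k, hk⟩ := hgen ⟨x, mem_centralizer_singleton_iff.2 hx⟩
    exact ⟨k, congrArg Subtype.val hk⟩
  obtain ⟨k, rfl⟩ := hmem u (Commute.refl u)
  refine ⟨w, k, ?_, rfl, fun x hx => hmem x (hx.zpow_right k)⟩
  rintro rfl
  exact hu (zpow_zero w)

theorem exists_isRootWord {u : FreeGroup α} (hu : u ≠ 1) :
    ∃ (L : List (α × Bool)) (g : FreeGroup α) (k : ℤ),
      IsRootWord L ∧ k ≠ 0 ∧ u = g * FreeGroup.mk L ^ k * g⁻¹ := by
  classical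
  obtain ⟨w, k, hk, rfl, hw⟩ := freeGroup_exists_zpow_eq_and_commute hu
  let L := FreeGroup.reduceCyclically w.toWord
  let g := FreeGroup.mk (FreeGroup.reduceCyclically.conjugator w.toWord)
  have hwL : w = g * FreeGroup.mk L * g⁻¹ := by
    rw [FreeGroup.inv_mk, FreeGroup.mul_mk, FreeGroup.mul_mk,
      FreeGroup.reduceCyclically.conj_conjugator_reduceCyclically, FreeGroup.mk_toWord]
  refine ⟨L, g, k, ⟨fun hL => hu ?_, ?_, fun x hx => ?_⟩, hk, ?_⟩
  · rw [hwL, hL, ← FreeGroup.one_eq_mk, mul_one, mul_inv_cancel, one_zpow]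
  · exact FreeGroup.reduceCyclically.isCyclicallyReduced FreeGroup.isReduced_toWord
  · obtain ⟨m, hm⟩ := hw (g * x * g⁻¹) (hwL ▸ (Commute.conj_iff g).2 hx)
    refine ⟨m, mul_left_cancel (mul_right_cancel ((?_ : _ = _).trans hm))⟩
    rw [← conj_zpow, ← hwL]
  · rw [← conj_zpow, ← hwL]

theorem norm_mk_of_isReduced [DecidableEq α] {L : List (α × Bool)}
    (hL : FreeGroup.IsReduced L) : (FreeGroup.mk L).norm = L.length := by
  rw [FreeGroup.norm, FreeGroup.toWord_mk, hL.reduce_eq]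

theorem norm_mk_zpow_of_isCyclicallyReduced [DecidableEq α] {L : List (α × Bool)}
    (hL : FreeGroup.IsCyclicallyReduced L) (m : ℤ) :
    (FreeGroup.mk L ^ m).norm = m.natAbs * L.length := by
  have hpow (n : ℕ) : (FreeGroup.mk L ^ n).norm = n * L.length := by
    rw [FreeGroup.pow_mk, norm_mk_of_isReduced (hL.flatten_replicate n).isReduced]
    simp
  obtain ⟨n, rfl | rfl⟩ := Int.eq_nat_or_neg m
  · rw [zpow_natCast, hpow, Int.natAbs_natCast]
  · rw [zpow_neg, FreeGroup.norm_inv_eq, zpow_natCast, hpow, Int.natAbs_neg, Int.natAbs_natCast]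

theorem IsRootWord.not_commute_of_append {L₁ L₂ : List (α × Bool)} (hL : IsRootWord (L₁ ++ L₂))
    (h₁ : L₁ ≠ []) (h₂ : L₂ ≠ []) :
    ¬ Commute (FreeGroup.mk L₁) (FreeGroup.mk (L₁ ++ L₂)) := by
  classical
  intro hcomm
  obtain ⟨m, hm⟩ := hL.mem_zpowers_of_commute _ hcomm
  have hnorm := norm_mk_zpow_of_isCyclicallyReduced hL.isCyclicallyReduced m
  rw [show FreeGroup.mk (L₁ ++ L₂) ^ m = FreeGroup.mk L₁ from hm, norm_mk_of_isReduced
    (hL.isCyclicallyReduced.isReduced.infix (List.prefix_append _ _).isInfix),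
    List.length_append] at hnorm
  have hlen₁ := List.length_pos_of_ne_nil h₁
  have hlen₂ := List.length_pos_of_ne_nil h₂
  rcases Nat.eq_zero_or_pos m.natAbs with h | h
  · rw [h] at hnorm
    omega
  · nlinarith

end FreeGroupCentralizers

/-! ### Wreath products over Cayley graphs -/

section PathProd

variable {α Q A : Type*} [Group Q] [Group A]

/-- The homomorphism to the wreath product lifting `φ` along a labelling `f` of the edges of the
Cayley graph of `φ`; the edge `(s, x)` goes from `x` to `x * φ (FreeGroup.of s)`. -/
def wreathLift (φ : FreeGroup α →* Q) (f : α × Q → A) : FreeGroup α →* A ≀ᵣ Q :=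
  FreeGroup.lift fun s => ⟨fun x => f (s, x⁻¹), φ (FreeGroup.of s)⟩

/-- The product of the labels `f` along the path in the Cayley graph of `φ` that starts at `y` and
reads `w`. -/
def pathProd (φ : FreeGroup α →* Q) (f : α × Q → A) (w : FreeGroup α) (y : Q) : A :=
  (wreathLift φ f w).left y⁻¹

variable (φ : FreeGroup α →* Q) (f : α × Q → A)

theorem wreathLift_right (w : FreeGroup α) : (wreathLift φ f w).right = φ w := by
  have h : RegularWreathProduct.rightHom.comp (wreathLift φ f) = φ := by
    ext s
    simp [wreathLift]
  exact DFunLike.congr_fun h w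

theorem pathProd_one (y : Q) : pathProd φ f 1 y = 1 := by
  simp [pathProd]

theorem pathProd_mul (g h : FreeGroup α) (y : Q) :
    pathProd φ f (g * h) y = pathProd φ f g y * pathProd φ f h (y * φ g) := by
  simp [pathProd, wreathLift_right]

theorem pathProd_of (s : α) (y : Q) : pathProd φ f (FreeGroup.of s) y = f (s, y) := by
  simp [pathProd, wreathLift]

theorem pathProd_inv (w : FreeGroup α) (y : Q) :
    pathProd φ f w⁻¹ y = (pathProd φ f w (y * (φ w)⁻¹))⁻¹ := by
  have h := pathProd_mul φ f w⁻¹ w y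
  rw [inv_mul_cancel, pathProd_one, map_inv] at h
  exact eq_inv_of_mul_eq_one_left h.symm

theorem map_pathProd {B : Type*} [Group B] (ψ : A →* B) (w : FreeGroup α) (y : Q) :
    ψ (pathProd φ f w y) = pathProd φ (ψ ∘ f) w y := by
  induction w using FreeGroup.induction_on generalizing y with
  | C1 => simp only [pathProd_one, map_one]
  | of s => simp only [pathProd_of, Function.comp_apply]
  | inv_of s _ => simp only [pathProd_inv, pathProd_of, map_inv, Function.comp_apply]
  | mul g h hg hh => simp only [pathProd_mul, map_mul, hg, hh]

theorem pathProd_pow {w : FreeGroup α} (hw : φ w = 1) (y : Q) (n : ℕ) :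
    pathProd φ f (w ^ n) y = pathProd φ f w y ^ n := by
  induction n with
  | zero => rw [pow_zero, pow_zero, pathProd_one]
  | succ n ih => rw [pow_succ, pathProd_mul, ih, map_pow, hw, one_pow, mul_one, pow_succ]

theorem wreathLift_pow_eq_one {w : FreeGroup α} (hw : φ w = 1) {m : ℕ}
    (h : ∀ y, pathProd φ f w y ^ m = 1) : wreathLift φ f w ^ m = 1 := by
  rw [← map_pow]
  refine RegularWreathProduct.ext (funext fun x => ?_) ?_
  · rw [← inv_inv x]
    exact (pathProd_pow φ f hw _ m).trans (h _)
  · rw [wreathLift_right, map_pow, hw, one_pow, RegularWreathProduct.one_right]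

theorem orderOf_pathProd_dvd {w : FreeGroup α} (hw : φ w = 1) (y : Q) :
    orderOf (pathProd φ f w y) ∣ orderOf (wreathLift φ f w) := by
  refine orderOf_dvd_of_pow_eq_one ?_
  rw [← pathProd_pow φ f hw, pathProd, map_pow, pow_orderOf_eq_one]
  rfl

theorem pathProd_eq_of_commute {A : Type*} [CommGroup A] (f : α × Q → A) {g w : FreeGroup α}
    (hg : φ g = 1) (hgw : Commute g w) (y : Q) :
    pathProd φ f g (y * φ w) = pathProd φ f g y := by
  have h := congrArg (pathProd φ f · y) hgw.eq
  simp only [pathProd_mul, hg, mul_one] at h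
  rw [mul_comm] at h
  exact (mul_left_cancel h).symm

/-- The sum of the integer weights along the path that starts at `y` and reads `w`, as a linear
functional of the weights. -/
def pathSum (w : FreeGroup α) (y : Q) : (α × Q → ℤ) →+ ℤ where
  toFun c := (pathProd φ (Multiplicative.ofAdd ∘ c) w y).toAdd
  map_zero' := by
    rw [toAdd_eq_zero]
    induction w using FreeGroup.induction_on generalizing y with
    | C1 => exact pathProd_one ..
    | of s => exact pathProd_of ..
    | inv_of s h => rw [pathProd_inv, h, inv_one]
    | mul g h hg hh => rw [pathProd_mul, hg, hh, one_mul]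
  map_add' c d := by
    rw [← toAdd_mul, Multiplicative.toAdd.injective.eq_iff]
    induction w using FreeGroup.induction_on generalizing y with
    | C1 => simp only [pathProd_one, mul_one]
    | of s => simp only [pathProd_of, Function.comp_apply, Pi.add_apply, ofAdd_add]
    | inv_of s h => simp only [pathProd_inv, h, mul_inv]
    | mul g h hg hh => simp only [pathProd_mul, hg, hh, mul_mul_mul_comm]

end PathProd

section FirstReturn

variable {α Q : Type*} [Group Q]

/-- The edge of the Cayley graph of `φ` crossed, in either direction, by reading the letter `l`
from the vertex `x`. -/
def cayleyEdge (φ : FreeGroup α →* Q) (l : α × Bool) (x : Q) : α × Q :=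
  (l.1, if l.2 then x else x * (φ (FreeGroup.of l.1))⁻¹)

/-- The edges of the Cayley graph of `φ` with both endpoints in `C`. -/
def innerEdges (φ : FreeGroup α →* Q) (C : Set Q) : Set (α × Q) :=
  {e | e.2 ∈ C ∧ e.2 * φ (FreeGroup.of e.1) ∈ C}

/-- A cyclically reduced word is a first return for `φ` if the path it labels in the Cayley graph of
`φ` comes back to its initial vertex at the end and not before. -/
structure IsFirstReturn (φ : FreeGroup α →* Q) (L : List (α × Bool)) : Prop where
  ne_nil : L ≠ []
  isCyclicallyReduced : FreeGroup.IsCyclicallyReduced L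
  map_eq_one : φ (FreeGroup.mk L) = 1
  map_ne_one : ∀ L₁ L₂, L = L₁ ++ L₂ → L₁ ≠ [] → L₂ ≠ [] → φ (FreeGroup.mk L₁) ≠ 1

variable {φ : FreeGroup α →* Q}

theorem freeGroup_mk_singleton (s : α) (ε : Bool) :
    FreeGroup.mk [(s, ε)] = if ε then FreeGroup.of s else (FreeGroup.of s)⁻¹ := by
  cases ε <;> rfl

theorem freeGroup_mk_cons (l : α × Bool) (L : List (α × Bool)) :
    FreeGroup.mk (l :: L) = FreeGroup.mk [l] * FreeGroup.mk L := by
  rw [FreeGroup.mul_mk, List.singleton_append]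

theorem cayleyEdge_mem_innerEdges {C : Set Q} {l : α × Bool} {x : Q} :
    cayleyEdge φ l x ∈ innerEdges φ C ↔ x ∈ C ∧ x * φ (FreeGroup.mk [l]) ∈ C := by
  obtain ⟨s, _ | _⟩ := l <;> simp [cayleyEdge, innerEdges, freeGroup_mk_singleton, and_comm]

theorem pathProd_mk_singleton {A : Type*} [Group A] (f : α × Q → A) (l : α × Bool) (x : Q) :
    pathProd φ f (FreeGroup.mk [l]) x =
      if l.2 then f (cayleyEdge φ l x) else (f (cayleyEdge φ l x))⁻¹ := by
  obtain ⟨s, _ | _⟩ := l <;> simp [cayleyEdge, freeGroup_mk_singleton, pathProd_inv, pathProd_of]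

theorem cayleyEdge_eq_cayleyEdge_iff {l l₀ : α × Bool} {x y : Q} :
    cayleyEdge φ l x = cayleyEdge φ l₀ y ↔ (l = l₀ ∧ x = y) ∨
      (l.1 = l₀.1 ∧ l.2 ≠ l₀.2 ∧ x * φ (FreeGroup.mk [l]) = y) := by
  obtain ⟨s, ε⟩ := l
  obtain ⟨s₀, ε₀⟩ := l₀
  cases ε <;> cases ε₀ <;> simp +contextual [cayleyEdge, freeGroup_mk_singleton,
    mul_inv_eq_iff_eq_mul, eq_mul_inv_iff_mul_eq]

theorem pathProd_mk_eq_one {A : Type*} [Group A] {f : α × Q → A} {L : List (α × Bool)} {y : Q}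
    (h : ∀ L₁ l L₂, L = L₁ ++ l :: L₂ → f (cayleyEdge φ l (y * φ (FreeGroup.mk L₁))) = 1) :
    pathProd φ f (FreeGroup.mk L) y = 1 := by
  induction L generalizing y with
  | nil => exact pathProd_one ..
  | cons a T ih =>
    have ha := h [] a T rfl
    rw [← FreeGroup.one_eq_mk, map_one, mul_one] at ha
    rw [freeGroup_mk_cons, pathProd_mul, pathProd_mk_singleton, ha, inv_one, ite_self, one_mul]
    refine ih fun L₁ l L₂ hT => ?_
    rw [mul_assoc, ← map_mul, ← freeGroup_mk_cons]
    exact h (a :: L₁) l L₂ (by rw [hT, List.cons_append])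

theorem IsFirstReturn.cayleyEdge_ne {L L₁ L₂ T : List (α × Bool)} {l₀ l : α × Bool}
    (hL : IsFirstReturn φ L) (h₀ : L = l₀ :: T) (h : L = L₁ ++ l :: L₂) (h₁ : L₁ ≠ []) (x : Q) :
    cayleyEdge φ l (x * φ (FreeGroup.mk L₁)) ≠ cayleyEdge φ l₀ x := by
  rw [Ne, cayleyEdge_eq_cayleyEdge_iff]
  rintro (⟨-, hx⟩ | ⟨hs, hε, hx⟩)
  · exact hL.map_ne_one L₁ _ h h₁ (List.cons_ne_nil _ _) (mul_eq_left.1 hx)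
  · rw [mul_assoc, ← map_mul, FreeGroup.mul_mk, mul_eq_left] at hx
    rcases eq_or_ne L₂ [] with rfl | h₂
    · exact hε (hL.isCyclicallyReduced.2 l (by simp [h]) l₀ (by simp [h₀]) hs)
    · exact hL.map_ne_one (L₁ ++ [l]) L₂ (by simp [h]) (by simp) h₂ hx

theorem IsFirstReturn.pathProd_eq {A : Type*} [Group A] {f : α × Q → A} {T : List (α × Bool)}
    {l₀ : α × Bool} (hL : IsFirstReturn φ (l₀ :: T)) {y : Q}
    (hf : ∀ L₁ l L₂, l₀ :: T = L₁ ++ l :: L₂ → cayleyEdge φ l (y * φ (FreeGroup.mk L₁)) ≠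
      cayleyEdge φ l₀ y → f (cayleyEdge φ l (y * φ (FreeGroup.mk L₁))) = 1) :
    pathProd φ f (FreeGroup.mk (l₀ :: T)) y = pathProd φ f (FreeGroup.mk [l₀]) y := by
  rw [freeGroup_mk_cons, pathProd_mul, mul_eq_left]
  refine pathProd_mk_eq_one fun L₁ l L₂ hT => ?_
  have h : l₀ :: T = (l₀ :: L₁) ++ l :: L₂ := by rw [hT, List.cons_append]
  rw [mul_assoc, ← map_mul, ← freeGroup_mk_cons]
  exact hf _ l L₂ h (hL.cayleyEdge_ne rfl h (List.cons_ne_nil _ _) y)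

theorem exists_prefix_of_flatten_replicate_eq_append {β : Type*} {L L₁ L₂ : List β} {k : ℕ}
    (h : (List.replicate k L).flatten = L₁ ++ L₂) (h₂ : L₂ ≠ []) :
    ∃ i < k, ∃ P S, L = P ++ S ∧ S ≠ [] ∧ L₁ = (List.replicate i L).flatten ++ P := by
  induction k generalizing L₁ with
  | zero => simp_all
  | succ k ih =>
    have hshift (T : List β) (hL₁ : L₁ = L ++ T) (hT : (List.replicate k L).flatten = T ++ L₂) :
        ∃ i < k + 1, ∃ P S, L = P ++ S ∧ S ≠ [] ∧ L₁ = (List.replicate i L).flatten ++ P := by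
      obtain ⟨i, hi, P, S, hL, hS, rfl⟩ := ih hT
      exact ⟨i + 1, by omega, P, S, hL, hS, by simp [hL₁, List.replicate_succ]⟩
    rw [List.replicate_succ, List.flatten_cons, List.append_eq_append_iff] at h
    obtain ⟨T, hL₁, hT⟩ | ⟨S, hS, hL₂⟩ := h
    · exact hshift T hL₁ hT
    · rcases eq_or_ne S [] with rfl | hne
      · exact hshift [] (by simpa using hS.symm) (by simpa using hL₂.symm)
      · exact ⟨0, k.succ_pos, L₁, S, hS, hne, by simp⟩

theorem isFirstReturn_flatten_replicate {L : List (α × Bool)} (hnil : L ≠ [])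
    (hL : FreeGroup.IsCyclicallyReduced L) (hfin : IsOfFinOrder (φ (FreeGroup.mk L)))
    (hcomm : ∀ L₁ L₂, L = L₁ ++ L₂ → L₁ ≠ [] → L₂ ≠ [] →
      ¬ Commute (φ (FreeGroup.mk L₁)) (φ (FreeGroup.mk L))) :
    IsFirstReturn φ (List.replicate (orderOf (φ (FreeGroup.mk L))) L).flatten where
  ne_nil := by simpa [hnil] using hfin
  isCyclicallyReduced := hL.flatten_replicate _
  map_eq_one := by rw [← FreeGroup.pow_mk, map_pow, pow_orderOf_eq_one]
  map_ne_one L₁ L₂ h h₁ h₂ h1 := by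
    obtain ⟨i, hi, P, S, hPS, hS, rfl⟩ := exists_prefix_of_flatten_replicate_eq_append h h₂
    rw [← FreeGroup.mul_mk, ← FreeGroup.pow_mk, map_mul, map_pow] at h1
    rcases eq_or_ne P [] with rfl | hP
    · rw [← FreeGroup.one_eq_mk, map_one, mul_one] at h1
      have hi₀ : i = 0 := by
        by_contra hi₀
        exact (orderOf_le_of_pow_eq_one (Nat.pos_of_ne_zero hi₀) h1).not_gt hi
      simp [hi₀] at h₁
    · refine hcomm P S hPS hP hS ?_
      rw [eq_inv_of_mul_eq_one_right h1]
      exact ((Commute.refl _).pow_left i).inv_left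

end FirstReturn

theorem exists_forall_addMonoidHom_ne_zero {ι M A : Type*} [Finite ι] [AddCommGroup M]
    [AddCommGroup A] [IsAddTorsionFree A] {ℓ : ι → M →+ A} (h : ∀ i, ℓ i ≠ 0) :
    ∃ c, ∀ i, ℓ i c ≠ 0 := by
  by_contra! hcon
  have := Fintype.ofFinite ι
  obtain ⟨i, -, hi⟩ := AddSubgroup.exists_finiteIndex_of_leftCoset_cover
    (s := Finset.univ) (g := fun _ : ι => (0 : M)) (H := fun i => (ℓ i).ker) (by
      simpa [Set.eq_univ_iff_forall] using hcon)
  refine h i (AddMonoidHom.ext fun c => ?_)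
  have hc := AddSubgroup.nsmul_index_mem (ℓ i).ker c
  rw [AddMonoidHom.mem_ker, map_nsmul] at hc
  exact (nsmul_eq_zero_iff_right hi.index_ne_zero).1 hc

section Affine

/-- The action of the units of a ring on its additive group, written multiplicatively. -/
def unitsMulAut (R : Type*) [Ring R] : Rˣ →* MulAut (Multiplicative R) where
  toFun r := AddEquiv.toMultiplicative (DistribMulAction.toAddEquiv R r)
  map_one' := MulEquiv.ext fun x => one_smul Rˣ x.toAdd
  map_mul' r s := MulEquiv.ext fun x => mul_smul r s x.toAdd

theorem semidirectProduct_pow_eq_one_of_fixedPointFree {N G : Type*} [CommGroup N] [Group G]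
    {θ : G →* MulAut N} {a : N ⋊[θ] G} (ha : ∀ n, θ a.right n = n → n = 1) {m : ℕ}
    (hm : a.right ^ m = 1) : a ^ m = 1 := by
  have hright : (a ^ m).right = 1 := (map_pow SemidirectProduct.rightHom a m).trans hm
  refine SemidirectProduct.ext (ha _ ?_) hright
  have hcomm := congrArg SemidirectProduct.left (Commute.self_pow a m).eq
  rw [SemidirectProduct.mul_left, SemidirectProduct.mul_left, hright, map_one, MulAut.one_apply,
    mul_comm] at hcomm
  exact mul_right_cancel hcomm

theorem pow_eq_one_of_right_ne_one {K : Type*} [Field K] {a : Multiplicative K ⋊[unitsMulAut K] Kˣ}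
    (ha : a.right ≠ 1) {m : ℕ} (hm : a.right ^ m = 1) : a ^ m = 1 := by
  refine semidirectProduct_pow_eq_one_of_fixedPointFree (fun n hn => ?_) hm
  have hn' : (a.right : K) * n.toAdd = n.toAdd := congrArg Multiplicative.toAdd hn
  by_contra hne
  have hne' : n.toAdd ≠ 0 := mt toAdd_eq_zero.1 hne
  exact ha (Units.ext ((mul_eq_right₀ hne').1 hn'))

theorem orderOf_inl_ofAdd_one (R : Type*) [Ring R] :
    orderOf (SemidirectProduct.inl (.ofAdd 1) : Multiplicative R ⋊[unitsMulAut R] Rˣ) =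
      addOrderOf (1 : R) := by
  rw [orderOf_injective _ SemidirectProduct.inl_injective, orderOf_ofAdd_eq_addOrderOf]

end Affine

section Weights

variable {α Q : Type*} [Group Q] {φ : FreeGroup α →* Q}

theorem IsFirstReturn.pathSum_single_ne_zero [DecidableEq (α × Q)] {l₀ : α × Bool}
    {T : List (α × Bool)} (hL : IsFirstReturn φ (l₀ :: T)) (y : Q) :
    pathSum φ (FreeGroup.mk (l₀ :: T)) y (Pi.single (cayleyEdge φ l₀ y) 1) ≠ 0 := by
  rw [pathSum, AddMonoidHom.coe_mk, ZeroHom.coe_mk, hL.pathProd_eq fun L₁ l L₂ _ hne => by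
    rw [Function.comp_apply, Pi.single_eq_of_ne hne, ofAdd_zero], pathProd_mk_singleton]
  split_ifs <;> simp

theorem pathSum_eq_of_commute {g w : FreeGroup α} (hg : φ g = 1) (hgw : Commute g w) (y : Q)
    (n : ℕ) (c : α × Q → ℤ) : pathSum φ g (y * φ w ^ n) c = pathSum φ g y c := by
  rw [← map_pow]
  exact congrArg Multiplicative.toAdd
    (pathProd_eq_of_commute φ (Multiplicative.ofAdd ∘ c) hg (hgw.pow_right n) y)

theorem IsFirstReturn.exists_forall_pathSum_ne_zero [Finite Q] {L : List (α × Bool)}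
    (hL : IsFirstReturn φ L) {C : Set Q} {w : FreeGroup α} (hw : Commute (FreeGroup.mk L) w)
    (hC : ∀ y, ∃ n : ℕ, y * φ w ^ n ∉ C) :
    ∃ c : α × Q → ℤ, (∀ e ∈ innerEdges φ C, c e = 0) ∧ ∀ y, pathSum φ (FreeGroup.mk L) y c ≠ 0 := by
  classical
  obtain ⟨l₀, T, rfl⟩ := List.exists_cons_of_ne_nil hL.ne_nil
  let M : AddSubgroup (α × Q → ℤ) := AddSubgroup.pi (innerEdges φ C) fun _ => ⊥
  have hM (c : α × Q → ℤ) : c ∈ M ↔ ∀ e ∈ innerEdges φ C, c e = 0 := by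
    simp only [M, AddSubgroup.mem_pi, AddSubgroup.mem_bot]
  obtain ⟨⟨c, hcM⟩, hc⟩ := exists_forall_addMonoidHom_ne_zero
    (ℓ := fun y : {y : Q // y ∉ C} => (pathSum φ (FreeGroup.mk (l₀ :: T)) y).comp M.subtype) (by
      rintro ⟨y, hy⟩ h
      have hmem : Pi.single (cayleyEdge φ l₀ y) 1 ∈ M := (hM _).2 fun e he =>
        Pi.single_eq_of_ne (by rintro rfl; exact hy (cayleyEdge_mem_innerEdges.1 he).1) 1
      have h₀ := DFunLike.congr_fun h ⟨_, hmem⟩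
      rw [AddMonoidHom.comp_apply] at h₀
      exact hL.pathSum_single_ne_zero y h₀)
  refine ⟨c, (hM c).1 hcM, fun y => ?_⟩
  obtain ⟨n, hn⟩ := hC y
  rw [← pathSum_eq_of_commute hL.map_eq_one hw y n]
  exact hc ⟨_, hn⟩

end Weights

theorem exists_prime_exists_forall_zpow_ne_one {ι : Type*} [Finite ι] {ℓ : ι → ℤ}
    (hℓ : ∀ i, ℓ i ≠ 0) (B : ℕ) :
    ∃ p : ℕ, p.Prime ∧ B < p ∧ ∃ ζ : (ZMod p)ˣ, ∀ i, ζ ^ ℓ i ≠ 1 := by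
  have := Fintype.ofFinite ι
  obtain ⟨p, hBp, hp⟩ := Nat.exists_infinite_primes (B + ∑ i, (ℓ i).natAbs + 2)
  have : Fact p.Prime := ⟨hp⟩
  obtain ⟨ζ, hζ⟩ := IsCyclic.exists_generator (α := (ZMod p)ˣ)
  have hord : orderOf ζ = p - 1 := by
    rw [orderOf_eq_card_of_forall_mem_zpowers hζ, Nat.card_eq_fintype_card, ZMod.card_units]
  refine ⟨p, hp, by omega, ζ, fun i h => ?_⟩
  have hdvd : p - 1 ∣ (ℓ i).natAbs := by
    rw [← hord, ← Int.natCast_dvd]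
    exact orderOf_dvd_iff_zpow_eq_one.2 h
  have hle := Nat.le_of_dvd (Int.natAbs_pos.2 (hℓ i)) hdvd
  have hsum := Finset.single_le_sum (f := fun i => (ℓ i).natAbs) (fun _ _ => Nat.zero_le _)
    (Finset.mem_univ i)
  omega

section PrimeOrder

variable {α Q : Type*} [Group Q] {φ : FreeGroup α →* Q}

theorem map_pathProd_eq_zpow_pathSum {A G : Type*} [Group A] [Group G] (π : A →* G)
    {f : α × Q → A} {ζ : G} {c : α × Q → ℤ} (h : ∀ e, π (f e) = ζ ^ c e) (w : FreeGroup α) (y : Q) :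
    π (pathProd φ f w y) = ζ ^ pathSum φ w y c := by
  have hf : π ∘ f = zpowersHom G ζ ∘ Multiplicative.ofAdd ∘ c := funext h
  rw [map_pathProd, hf, ← map_pathProd]
  rfl

theorem IsFirstReturn.orderOf_dvd_orderOf_wreathLift {A : Type*} [Group A] {f : α × Q → A}
    {l₀ : α × Bool} {T : List (α × Bool)} (hL : IsFirstReturn φ (l₀ :: T)) {y : Q}
    (hf : ∀ L₁ l L₂, l₀ :: T = L₁ ++ l :: L₂ → cayleyEdge φ l (y * φ (FreeGroup.mk L₁)) ≠
      cayleyEdge φ l₀ y → f (cayleyEdge φ l (y * φ (FreeGroup.mk L₁))) = 1) :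
    orderOf (f (cayleyEdge φ l₀ y)) ∣ orderOf (wreathLift φ f (FreeGroup.mk (l₀ :: T))) := by
  refine .trans (dvd_of_eq ?_) (orderOf_pathProd_dvd φ f hL.map_eq_one y)
  rw [hL.pathProd_eq hf, pathProd_mk_singleton]
  split_ifs
  exacts [rfl, (orderOf_inv _).symm]

theorem IsFirstReturn.exists_prime_orderOf [Finite Q] {Lu Lv : List (α × Bool)}
    (hu : IsFirstReturn φ Lu) (hv : IsFirstReturn φ Lv) {C : Set Q}
    (hvC : ∀ L₁ L₂, Lv = L₁ ++ L₂ → φ (FreeGroup.mk L₁) ∈ C) {w : FreeGroup α}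
    (hw : Commute (FreeGroup.mk Lu) w) (hC : ∀ y, ∃ n : ℕ, y * φ w ^ n ∉ C) (B : ℕ) :
    ∃ p : ℕ, p.Prime ∧ B < p ∧ ∃ N : FiniteIndexNormalSubgroup (FreeGroup α),
      orderOf (FreeGroup.mk Lu : FreeGroup α ⧸ N.toSubgroup) ∣ p - 1 ∧
        p ∣ orderOf (FreeGroup.mk Lv : FreeGroup α ⧸ N.toSubgroup) := by
  classical
  obtain ⟨c, hc₀, hc⟩ := hu.exists_forall_pathSum_ne_zero hw hC
  obtain ⟨p, hp, hBp, ζ, hζ⟩ := exists_prime_exists_forall_zpow_ne_one hc B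
  have : Fact p.Prime := ⟨hp⟩
  obtain ⟨l, T, rfl⟩ := List.exists_cons_of_ne_nil hv.ne_nil
  have hinner (L₁ l' L₂) (h : l :: T = L₁ ++ l' :: L₂) :
      cayleyEdge φ l' (1 * φ (FreeGroup.mk L₁)) ∈ innerEdges φ C := by
    refine cayleyEdge_mem_innerEdges.2 ⟨?_, ?_⟩
    · simpa only [one_mul] using hvC L₁ _ h
    · rw [one_mul, ← map_mul, FreeGroup.mul_mk]
      exact hvC _ L₂ (by rw [h, List.append_cons])
  let A := Multiplicative (ZMod p) ⋊[unitsMulAut (ZMod p)] (ZMod p)ˣ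
  have : Finite A := .of_equiv _ SemidirectProduct.equivProd.symm
  let f : α × Q → A := Function.update (fun e => .inr (ζ ^ c e)) (cayleyEdge φ l 1)
    (.inl (.ofAdd 1))
  have hf₀ : f (cayleyEdge φ l 1) = .inl (.ofAdd 1) := Function.update_self ..
  have hf {e} (he : e ≠ cayleyEdge φ l 1) : f e = .inr (ζ ^ c e) := Function.update_of_ne he ..
  have hfr (e) : SemidirectProduct.rightHom (f e) = ζ ^ c e := by
    rcases eq_or_ne e (cayleyEdge φ l 1) with rfl | he
    · have hinner₀ := hinner [] l T rfl
      rw [← FreeGroup.one_eq_mk, map_one, mul_one] at hinner₀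
      rw [hc₀ _ hinner₀, zpow_zero, hf₀, SemidirectProduct.rightHom_inl]
    · rw [hf he, SemidirectProduct.rightHom_inr]
  obtain ⟨N, hN⟩ := exists_finiteIndexNormalSubgroup_orderOf_eq (wreathLift φ f)
  refine ⟨p, hp, hBp, N, ?_, ?_⟩
  · rw [hN]
    refine orderOf_dvd_of_pow_eq_one (wreathLift_pow_eq_one φ f hu.map_eq_one fun y => ?_)
    refine pow_eq_one_of_right_ne_one ?_ (ZMod.units_pow_card_sub_one_eq_one p _)
    exact (map_pathProd_eq_zpow_pathSum SemidirectProduct.rightHom hfr _ y).trans_ne (hζ y)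
  · have hfv := hv.orderOf_dvd_orderOf_wreathLift (f := f) (y := 1) fun L₁ l' L₂ h hne => by
      rw [hf hne, hc₀ _ (hinner L₁ l' L₂ h), zpow_zero, map_one]
    rwa [hf₀, orderOf_inl_ofAdd_one, ZMod.addOrderOf_one, ← hN] at hfv

end PrimeOrder

theorem exists_mul_pow_mul_inv_notMem_zpowers {Q : Type*} [Group Q] {U V : Q} {S : Finset Q}
    (h : ∀ P ∈ S, ∀ n, 0 < n → n ≤ S.card → ¬ Commute (P * U ^ n * P⁻¹) V) (y : Q) :
    ∃ n : ℕ, ∀ P ∈ S, y * U ^ n * P⁻¹ ∉ zpowers V := by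
  by_contra! hcon
  choose P hP hmem using hcon
  obtain ⟨i, hi, j, hj, hij, hPij⟩ := Finset.exists_ne_map_eq_of_card_lt_of_maps_to
    (s := Finset.range (S.card + 1)) (t := S) (f := P) (by simp) (fun n _ => hP n)
  wlog hlt : i < j generalizing i j
  · exact this j hj i hi hij.symm hPij.symm (by omega)
  obtain ⟨n, rfl⟩ := Nat.exists_eq_add_of_lt hlt
  rw [Finset.mem_range] at hj
  refine h _ (hP i) (n + 1) n.succ_pos (by omega) ?_
  have hquot := mul_mem (inv_mem (hmem i)) (hmem (i + n + 1))
  rw [← hPij, add_assoc, pow_add] at hquot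
  obtain ⟨k, hk⟩ := hquot
  have hconj : P i * U ^ (n + 1) * (P i)⁻¹ = V ^ k := by
    rw [show V ^ k = _ from hk]
    group
  rw [hconj]
  exact (Commute.refl V).zpow_left k

theorem orderOf_dvd_mul_orderOf_pow {G : Type*} [Monoid G] (x : G) (n : ℕ) :
    orderOf x ∣ n * orderOf (x ^ n) :=
  orderOf_dvd_of_pow_eq_one (by rw [pow_mul, pow_orderOf_eq_one])

section RootWords

variable {α : Type*} {Lu Lv : List (α × Bool)}

theorem IsRootWord.isFirstReturn {Q : Type*} [Group Q] [Finite Q] {φ : FreeGroup α →* Q}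
    {L : List (α × Bool)} (hL : IsRootWord L) (hφ : ∀ P, P <+: L →
      Commute (φ (FreeGroup.mk P)) (φ (FreeGroup.mk L)) →
        Commute (FreeGroup.mk P) (FreeGroup.mk L)) :
    IsFirstReturn φ (List.replicate (orderOf (φ (FreeGroup.mk L))) L).flatten := by
  refine isFirstReturn_flatten_replicate hL.ne_nil hL.isCyclicallyReduced
    (isOfFinOrder_of_finite _) ?_
  rintro L₁ L₂ rfl h₁ h₂ hcomm
  exact hL.not_commute_of_append h₁ h₂ (hφ L₁ (List.prefix_append L₁ L₂) hcomm)

theorem exists_finiteIndexNormalSubgroup_forall_prefix_commute (Lu Lv : List (α × Bool)) (m : ℕ) :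
    ∃ N : FiniteIndexNormalSubgroup (FreeGroup α), let φ := QuotientGroup.mk' N.toSubgroup
      (∀ L ∈ [Lu, Lv], ∀ P, P <+: L → Commute (φ (FreeGroup.mk P)) (φ (FreeGroup.mk L)) →
        Commute (FreeGroup.mk P) (FreeGroup.mk L)) ∧
      ∀ P, P <+: Lv → ∀ n ≤ m, Commute (φ (FreeGroup.mk P) * φ (FreeGroup.mk Lu) ^ n *
        (φ (FreeGroup.mk P))⁻¹) (φ (FreeGroup.mk Lv)) →
          Commute (FreeGroup.mk P * FreeGroup.mk Lu ^ n * (FreeGroup.mk P)⁻¹)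
            (FreeGroup.mk Lv) := by
  have hprefixes (L : List (α × Bool)) : {P | P <+: L}.Finite :=
    L.inits.finite_toSet.subset fun P => (List.mem_inits P L).2
  obtain ⟨N, hN⟩ := exists_finiteIndexNormalSubgroup_forall_commute
    ((List.finite_toSet [Lu, Lv]).biUnion (fun L _ =>
      (hprefixes L).image fun P => (FreeGroup.mk P, FreeGroup.mk L)) |>.union
        (.image2 (fun P n => (FreeGroup.mk P * FreeGroup.mk Lu ^ n * (FreeGroup.mk P)⁻¹,
          FreeGroup.mk Lv)) (hprefixes Lv) (Set.finite_Iic m)))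
  exact ⟨N, fun L hL P hP => hN (_, _) (.inl (Set.mem_biUnion hL ⟨P, hP, rfl⟩)),
    fun P hP n hn => hN (_, _) (.inr ⟨P, hP, n, hn, rfl⟩)⟩

theorem exists_mul_pow_mul_inv_notMem_zpowers_of_prefixes {Q : Type*} [Group Q]
    {φ : FreeGroup α →* Q} (h : ∀ P, P <+: Lv → ∀ n, 0 < n → n ≤ Lv.inits.length →
      ¬ Commute (φ (FreeGroup.mk P) * φ (FreeGroup.mk Lu) ^ n * (φ (FreeGroup.mk P))⁻¹)
        (φ (FreeGroup.mk Lv))) (y : Q) :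
    ∃ n : ℕ, ∀ P, P <+: Lv → y * φ (FreeGroup.mk Lu) ^ n * (φ (FreeGroup.mk P))⁻¹ ∉
      zpowers (φ (FreeGroup.mk Lv)) := by
  classical
  let S : Finset Q := (Lv.inits.map fun P => φ (FreeGroup.mk P)).toFinset
  have hS : S.card ≤ Lv.inits.length := (List.toFinset_card_le _).trans_eq (List.length_map _)
  have hmem {x : Q} : x ∈ S ↔ ∃ P, P <+: Lv ∧ φ (FreeGroup.mk P) = x := by
    simp only [S, List.mem_toFinset, List.mem_map, List.mem_inits]
  obtain ⟨n, hn⟩ := exists_mul_pow_mul_inv_notMem_zpowers (S := S) (fun x hx n hn hnS => by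
    obtain ⟨P, hP, rfl⟩ := hmem.1 hx
    exact h P hP n hn (hnS.trans hS)) y
  exact ⟨n, fun P hP => hn _ (hmem.2 ⟨P, hP, rfl⟩)⟩

theorem exists_mk_eq_pow_mul_mk_of_flatten_replicate_eq_append {L L₁ L₂ : List (α × Bool)} {k : ℕ}
    (h : (List.replicate k L).flatten = L₁ ++ L₂) :
    ∃ (i : ℕ) (P : List (α × Bool)), P <+: L ∧
      FreeGroup.mk L₁ = FreeGroup.mk L ^ i * FreeGroup.mk P := by
  rcases eq_or_ne L₂ [] with rfl | h₂
  · refine ⟨k, [], List.nil_prefix, ?_⟩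
    rw [FreeGroup.pow_mk, h, FreeGroup.mul_mk, List.append_nil, List.append_nil]
  · obtain ⟨i, -, P, S, rfl, -, rfl⟩ := exists_prefix_of_flatten_replicate_eq_append h h₂
    refine ⟨i, P, List.prefix_append P S, ?_⟩
    rw [FreeGroup.pow_mk, FreeGroup.mul_mk]

theorem exists_prime_orderOf_of_isRootWord (hu : IsRootWord Lu) (hv : IsRootWord Lv)
    (h : ∀ (g : FreeGroup α) (n : ℕ), 0 < n →
      ¬ Commute (g * FreeGroup.mk Lu ^ n * g⁻¹) (FreeGroup.mk Lv)) (B : ℕ) :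
    ∃ p : ℕ, p.Prime ∧ B < p ∧ ∃ N : FiniteIndexNormalSubgroup (FreeGroup α),
      ¬ p ∣ orderOf (FreeGroup.mk Lu : FreeGroup α ⧸ N.toSubgroup) ∧
        p ∣ orderOf (FreeGroup.mk Lv : FreeGroup α ⧸ N.toSubgroup) := by
  obtain ⟨M, hM, hMconj⟩ :=
    exists_finiteIndexNormalSubgroup_forall_prefix_commute Lu Lv Lv.inits.length
  set φ := QuotientGroup.mk' M.toSubgroup
  have hlu := hu.isFirstReturn (hM Lu (by simp))
  have hlv := hv.isFirstReturn (hM Lv (by simp))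
  set ku := orderOf (φ (FreeGroup.mk Lu))
  set kv := orderOf (φ (FreeGroup.mk Lv))
  have horbit := exists_mul_pow_mul_inv_notMem_zpowers_of_prefixes (φ := φ)
    fun P hP n hn hnm hcomm => h _ n hn (hMconj P hP n hnm hcomm)
  let C := {x | ∃ P, P <+: Lv ∧ x * (φ (FreeGroup.mk P))⁻¹ ∈ zpowers (φ (FreeGroup.mk Lv))}
  have hC (L₁ L₂) (hsplit : (List.replicate kv Lv).flatten = L₁ ++ L₂) :
      φ (FreeGroup.mk L₁) ∈ C := by
    obtain ⟨i, P, hP, hL₁⟩ := exists_mk_eq_pow_mul_mk_of_flatten_replicate_eq_append hsplit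
    refine ⟨P, hP, i, ?_⟩
    rw [hL₁, map_mul, map_pow, mul_inv_cancel_right]
    exact zpow_natCast _ i
  have hcomm : Commute (FreeGroup.mk (List.replicate ku Lu).flatten) (FreeGroup.mk Lu) := by
    rw [← FreeGroup.pow_mk]
    exact Commute.pow_self _ _
  obtain ⟨p, hp, hpB, N, hNu, hNv⟩ := hlu.exists_prime_orderOf hlv hC hcomm
    (fun y => (horbit y).imp fun n hn ⟨P, hP, hmem⟩ => hn P hP hmem) (max B ku)
  rw [← FreeGroup.pow_mk, QuotientGroup.mk_pow] at hNu hNv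
  refine ⟨p, hp, (le_max_left _ _).trans_lt hpB, N, fun hdvd => ?_, hNv.trans (orderOf_pow_dvd kv)⟩
  have hdvd' := hdvd.trans ((orderOf_dvd_mul_orderOf_pow _ ku).trans (mul_dvd_mul_left ku hNu))
  have hku : 0 < ku := orderOf_pos _
  have hp2 := hp.two_le
  rcases hp.dvd_mul.1 hdvd' with h | h
  · exact (Nat.le_of_dvd hku h).not_gt ((le_max_right _ _).trans_lt hpB)
  · exact (Nat.le_of_dvd (by omega) h).not_gt (by omega)

end RootWords

/-! ### 2-order separability of free groups -/

/-- A group is 2-order separable if any two elements `u`, `v` such that `u` is conjugate neither to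
`v` nor to `v⁻¹` have images of different orders in some finite quotient. -/
def IsTwoOrderSeparable (G : Type*) [Group G] : Prop :=
  ∀ u v : G, ¬ IsConj u v → ¬ IsConj u v⁻¹ → ∃ N : FiniteIndexNormalSubgroup G,
    orderOf (u : G ⧸ N.toSubgroup) ≠ orderOf (v : G ⧸ N.toSubgroup)

section Orders

variable {G : Type*} [Group G]

theorem orderOf_conj (g x : G) : orderOf (g * x * g⁻¹) = orderOf x :=
  MulEquiv.orderOf_eq (MulAut.conj g) x

theorem orderOf_zpow_eq_orderOf_pow_natAbs (x : G) (k : ℤ) :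
    orderOf (x ^ k) = orderOf (x ^ k.natAbs) := by
  obtain ⟨n, rfl | rfl⟩ := Int.eq_nat_or_neg k
  · rw [zpow_natCast, Int.natAbs_natCast]
  · rw [zpow_neg, orderOf_inv, zpow_natCast, Int.natAbs_neg, Int.natAbs_natCast]

theorem orderOf_dvd_natAbs_mul_orderOf_zpow (x : G) (k : ℤ) :
    orderOf x ∣ k.natAbs * orderOf (x ^ k) := by
  rw [orderOf_zpow_eq_orderOf_pow_natAbs]
  exact orderOf_dvd_mul_orderOf_pow x k.natAbs

theorem IsPotentElement.exists_orderOf_pow_ne {g : G} (hg : IsPotentElement g) {m n : ℕ}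
    (hmn : m < n) : ∃ N : FiniteIndexNormalSubgroup G,
      orderOf ((g : G ⧸ N.toSubgroup) ^ m) ≠ orderOf ((g : G ⧸ N.toSubgroup) ^ n) := by
  obtain rfl | hm := m.eq_zero_or_pos
  · obtain ⟨N, hN⟩ := hg (n + 1) n.succ_pos
    refine ⟨N, fun h => ?_⟩
    rw [pow_zero, orderOf_one, eq_comm, orderOf_eq_one_iff, ← orderOf_dvd_iff_pow_eq_one, hN] at h
    exact absurd (Nat.le_of_dvd hmn h) n.lt_succ_self.not_ge
  · have hn : 0 < n := hm.trans hmn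
    obtain ⟨N, hN⟩ := hg (m * n) (Nat.mul_pos hm hn)
    refine ⟨N, ?_⟩
    rw [orderOf_pow_of_dvd hm.ne' (hN ▸ dvd_mul_right m n),
      orderOf_pow_of_dvd hn.ne' (hN ▸ dvd_mul_left n m), hN, Nat.mul_div_cancel_left n hm,
      Nat.mul_div_cancel m hn]
    exact hmn.ne'

theorem IsPotentElement.exists_orderOf_zpow_ne {g : G} (hg : IsPotentElement g) {s t : ℤ}
    (hst : s.natAbs ≠ t.natAbs) : ∃ N : FiniteIndexNormalSubgroup G,
      orderOf ((g : G ⧸ N.toSubgroup) ^ s) ≠ orderOf ((g : G ⧸ N.toSubgroup) ^ t) := by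
  simp only [orderOf_zpow_eq_orderOf_pow_natAbs _ s, orderOf_zpow_eq_orderOf_pow_natAbs _ t]
  obtain h | h := hst.lt_or_gt
  · exact hg.exists_orderOf_pow_ne h
  · obtain ⟨N, hN⟩ := hg.exists_orderOf_pow_ne h
    exact ⟨N, hN.symm⟩

end Orders

section TwoOrderSeparability

variable {α : Type*} {u v : FreeGroup α}

theorem freeGroup_exists_orderOf_ne_of_eq_zpow {w g : FreeGroup α} {s t : ℤ}
    (h₁ : ¬ IsConj u v) (h₂ : ¬ IsConj u v⁻¹) (hu : g * u * g⁻¹ = w ^ s) (hv : v = w ^ t) :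
    ∃ N : FiniteIndexNormalSubgroup (FreeGroup α),
      orderOf (u : FreeGroup α ⧸ N.toSubgroup) ≠ orderOf (v : FreeGroup α ⧸ N.toSubgroup) := by
  have hw : w ≠ 1 := by
    rintro rfl
    rw [one_zpow] at hu hv
    exact h₁ (isConj_iff.2 ⟨g, hu.trans hv.symm⟩)
  have hst : s.natAbs ≠ t.natAbs := by
    intro h
    obtain rfl | rfl := Int.natAbs_eq_natAbs_iff.1 h
    · exact h₁ (isConj_iff.2 ⟨g, hu.trans hv.symm⟩)
    · exact h₂ (isConj_iff.2 ⟨g, by rw [hu, hv, zpow_neg]⟩)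
  obtain ⟨N, hN⟩ := (isPotentElement_freeGroup hw).exists_orderOf_zpow_ne hst
  refine ⟨N, ?_⟩
  rwa [← orderOf_conj (g : FreeGroup α ⧸ N.toSubgroup), ← QuotientGroup.mk_inv,
    ← QuotientGroup.mk_mul, ← QuotientGroup.mk_mul, hu, hv, QuotientGroup.mk_zpow,
    QuotientGroup.mk_zpow]

theorem freeGroup_exists_zpow_of_commute_pow {x y : FreeGroup α} {n : ℕ} (hn : 0 < n)
    (h : Commute (x ^ n) y) : ∃ (w : FreeGroup α) (s t : ℤ), x = w ^ s ∧ y = w ^ t := by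
  obtain rfl | hx := eq_or_ne x 1
  · exact ⟨y, 0, 1, (zpow_zero y).symm, (zpow_one y).symm⟩
  have hxn : x ^ n ≠ 1 := mt (pow_eq_one_iff_left hn.ne').1 hx
  obtain ⟨⟨w, hw⟩, hgen⟩ := (isCyclic_centralizer_freeGroup hxn).exists_generator
  obtain ⟨s, hs⟩ := hgen ⟨x, mem_centralizer_singleton_iff.2 (Commute.self_pow x n)⟩
  obtain ⟨t, ht⟩ := hgen ⟨y, mem_centralizer_singleton_iff.2 h.symm⟩
  exact ⟨w, s, t, (congrArg Subtype.val hs).symm, (congrArg Subtype.val ht).symm⟩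

theorem exists_orderOf_zpow_ne_of_isRootWord {Lu Lv : List (α × Bool)} (hu : IsRootWord Lu)
    (hv : IsRootWord Lv)
    (h : ∀ (g : FreeGroup α) (n : ℕ), 0 < n →
      ¬ Commute (g * FreeGroup.mk Lu ^ n * g⁻¹) (FreeGroup.mk Lv))
    (k : ℤ) {l : ℤ} (hl : l ≠ 0) :
    ∃ N : FiniteIndexNormalSubgroup (FreeGroup α),
      orderOf ((FreeGroup.mk Lu : FreeGroup α ⧸ N.toSubgroup) ^ k) ≠
        orderOf ((FreeGroup.mk Lv : FreeGroup α ⧸ N.toSubgroup) ^ l) := by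
  obtain ⟨p, hp, hlp, N, hpu, hpv⟩ := exists_prime_orderOf_of_isRootWord hu hv h l.natAbs
  refine ⟨N, fun he => hpu ?_⟩
  have hpl : ¬ p ∣ l.natAbs := Nat.not_dvd_of_pos_of_lt (Int.natAbs_pos.2 hl) hlp
  have hpvl := (hp.dvd_mul.1 (hpv.trans (orderOf_dvd_natAbs_mul_orderOf_zpow _ l))).resolve_left hpl
  rw [← he] at hpvl
  exact hpvl.trans (orderOf_dvd_of_mem_zpowers (zpow_mem_zpowers _ k))

theorem freeGroup_exists_orderOf_ne_of_forall_ne_zpow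
    (h : ∀ (g w : FreeGroup α) (s t : ℤ), g * u * g⁻¹ = w ^ s → v ≠ w ^ t) :
    ∃ N : FiniteIndexNormalSubgroup (FreeGroup α),
      orderOf (u : FreeGroup α ⧸ N.toSubgroup) ≠ orderOf (v : FreeGroup α ⧸ N.toSubgroup) := by
  have hu : u ≠ 1 := fun hu => h 1 v 0 1 (by simp [hu]) (zpow_one v).symm
  have hv : v ≠ 1 := fun hv => h 1 u 1 0 (by simp) (by simpa using hv)
  obtain ⟨Lu, g, k, hLu, -, rfl⟩ := exists_isRootWord hu
  obtain ⟨Lv, c, l, hLv, hl, rfl⟩ := exists_isRootWord hv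
  have hcomm (x : FreeGroup α) (n : ℕ) (hn : 0 < n) :
      ¬ Commute (x * FreeGroup.mk Lu ^ n * x⁻¹) (FreeGroup.mk Lv) := by
    intro hx
    rw [← conj_pow] at hx
    obtain ⟨w, s, t, hs, ht⟩ := freeGroup_exists_zpow_of_commute_pow hn hx
    refine h (c * x * g⁻¹) (c * w * c⁻¹) (s * k) (t * l) ?_ ?_
    · rw [conj_zpow, zpow_mul, ← hs, conj_zpow]
      group
    · rw [conj_zpow, zpow_mul, ← ht]
  obtain ⟨N, hN⟩ := exists_orderOf_zpow_ne_of_isRootWord hLu hLv hcomm k hl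
  refine ⟨N, ?_⟩
  simpa only [QuotientGroup.mk_mul, QuotientGroup.mk_inv, QuotientGroup.mk_zpow,
    orderOf_conj] using hN

theorem isTwoOrderSeparable_freeGroup : IsTwoOrderSeparable (FreeGroup α) := by
  intro u v h₁ h₂
  by_cases h : ∃ (g w : FreeGroup α) (s t : ℤ), g * u * g⁻¹ = w ^ s ∧ v = w ^ t
  · obtain ⟨g, w, s, t, hu, hv⟩ := h
    exact freeGroup_exists_orderOf_ne_of_eq_zpow h₁ h₂ hu hv
  · exact freeGroup_exists_orderOf_ne_of_forall_ne_zpow fun g w s t hu hv =>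
      h ⟨g, w, s, t, hu, hv⟩

end TwoOrderSeparability

/-! ### Gluing finite quotients -/

universe u₁ u₂

section Gluing

theorem mem_zpowers_mk_mem_zpowers {G : Type*} [Group G] (x : G) (z : zpowers x) :
    z ∈ zpowers (⟨x, mem_zpowers x⟩ : zpowers x) := by
  obtain ⟨k, hk⟩ := z.2
  exact ⟨k, Subtype.ext hk⟩

theorem exists_mulEquiv_zpowers_of_orderOf_eq {G H : Type*} [Group G] [Group H] {x : G} {y : H}
    (h : orderOf x = orderOf y) :
    ∃ θ : zpowers x ≃* zpowers y, θ ⟨x, mem_zpowers x⟩ = ⟨y, mem_zpowers y⟩ :=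
  ⟨mulEquivOfOrderOfEq (mem_zpowers_mk_mem_zpowers x) (mem_zpowers_mk_mem_zpowers y)
    (by simpa only [orderOf_mk] using h), mulEquivOfOrderOfEq_apply_gen ..⟩

theorem exists_perm_apply_mul_eq_mul_apply {G : Type*} [Group G] [Finite G] {x y : G}
    (h : orderOf x = orderOf y) : ∃ e : Equiv.Perm G, ∀ z, e (x * z) = y * e z := by
  obtain ⟨S, hS, -⟩ := (zpowers x).exists_isComplement_right 1
  obtain ⟨T, hT, -⟩ := (zpowers y).exists_isComplement_right 1
  have hmul : orderOf x * Nat.card S = orderOf y * Nat.card T := by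
    simpa only [SetLike.coe_sort_coe, Nat.card_zpowers] using
      hS.card_mul_card.trans hT.card_mul_card.symm
  rw [h] at hmul
  obtain ⟨f⟩ := Finite.card_eq.1 (Nat.eq_of_mul_eq_mul_left (orderOf_pos y) hmul)
  obtain ⟨θ, hθ⟩ := exists_mulEquiv_zpowers_of_orderOf_eq h
  let e := hS.equiv.trans ((θ.toEquiv.prodCongr f).trans hT.equiv.symm)
  have he (z : G) : e z = θ (hS.equiv z).1 * f (hS.equiv z).2 := rfl
  refine ⟨e, fun z => ?_⟩
  rw [he, he, hS.equiv_mul_left_of_mem (mem_zpowers x), map_mul, hθ, Subgroup.coe_mul, mul_assoc]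

theorem exists_injective_monoidHom_apply_eq_apply {Q₁ Q₂ : Type*} [Group Q₁] [Group Q₂] [Finite Q₁]
    [Finite Q₂] {x : Q₁} {y : Q₂} (h : orderOf x = orderOf y) :
    ∃ (f₁ : Q₁ →* Equiv.Perm (Q₁ × Q₂)) (f₂ : Q₂ →* Equiv.Perm (Q₁ × Q₂)),
      Function.Injective f₁ ∧ Function.Injective f₂ ∧ f₁ x = f₂ y := by
  let i₁ := MonoidHom.inl Q₁ Q₂
  let i₂ := MonoidHom.inr Q₁ Q₂
  have hi₁ : Function.Injective i₁ := fun _ _ h => congrArg Prod.fst h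
  have hi₂ : Function.Injective i₂ := fun _ _ h => congrArg Prod.snd h
  let reg := MulAction.toPermHom (Q₁ × Q₂) (Q₁ × Q₂)
  have hreg : Function.Injective reg := MulAction.toPerm_injective
  obtain ⟨e, he⟩ := exists_perm_apply_mul_eq_mul_apply (x := i₁ x) (y := i₂ y)
    (by rw [orderOf_injective i₁ hi₁, orderOf_injective i₂ hi₂, h])
  refine ⟨(MulAut.conj e).toMonoidHom.comp (reg.comp i₁), reg.comp i₂,
    (MulAut.conj e).injective.comp (hreg.comp hi₁), hreg.comp hi₂, Equiv.ext fun z => ?_⟩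
  exact (he (e⁻¹ z)).trans (congrArg (i₂ y * ·) (e.apply_symm_apply z))

theorem IsTwoOrderSeparable.exists_monoidHom_of_isPotentElement {G₁ : Type u₁} {G₂ : Type u₂}
    [Group G₁] [Group G₂] (hG₁ : IsTwoOrderSeparable G₁) (a : G₁) {b : G₂} (hb : IsPotentElement b)
    {u v : G₁} (h₁ : ¬ IsConj u v) (h₂ : ¬ IsConj u v⁻¹) :
    ∃ (P : Type (max u₁ u₂)) (_ : Group P) (_ : Finite P) (ψ₁ : G₁ →* P) (ψ₂ : G₂ →* P),
      ψ₁ a = ψ₂ b ∧ orderOf (ψ₁ u) ≠ orderOf (ψ₁ v) := by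
  obtain ⟨N₁, hN₁⟩ := hG₁ u v h₁ h₂
  obtain ⟨N₂, hN₂⟩ := hb (orderOf (a : G₁ ⧸ N₁.toSubgroup)) (orderOf_pos _)
  obtain ⟨f₁, f₂, hf₁, -, hf⟩ := exists_injective_monoidHom_apply_eq_apply hN₂.symm
  refine ⟨_, inferInstance, inferInstance, f₁.comp (QuotientGroup.mk' N₁.toSubgroup),
    f₂.comp (QuotientGroup.mk' N₂.toSubgroup), hf, ?_⟩
  simpa only [MonoidHom.comp_apply, QuotientGroup.mk'_apply, orderOf_injective f₁ hf₁] using hN₁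

end Gluing

theorem exists_pushoutI_hom_of_apply_eq {α β : Type} {a : FreeGroup α} {b : FreeGroup β} {P : Type*}
    [Group P] (ψ₁ : FreeGroup α →* P) (ψ₂ : FreeGroup β →* P) (h : ψ₁ a = ψ₂ b) :
    ∃ Φ : PushoutI (amalMaps a b) →* P, ∀ w : FreeGroup α,
      Φ (PushoutI.of (φ := amalMaps a b) true w) = ψ₁ w := by
  let f : ∀ i : Bool, fam α β i →* P
    | true => ψ₁
    | false => ψ₂
  have hf : ∀ i, (f i).comp (amalMaps a b i) = FreeGroup.lift fun _ => ψ₁ a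
    | true => FreeGroup.ext_hom _ _ fun s => by
      change ψ₁ (FreeGroup.lift (fun _ => a) (.of s)) = FreeGroup.lift (fun _ => ψ₁ a) (.of s)
      simp only [FreeGroup.lift_apply_of]
    | false => FreeGroup.ext_hom _ _ fun s => by
      change ψ₂ (FreeGroup.lift (fun _ => b) (.of s)) = FreeGroup.lift (fun _ => ψ₁ a) (.of s)
      simp only [FreeGroup.lift_apply_of, h]
  exact ⟨PushoutI.lift f _ hf, fun w => PushoutI.lift_of (φ := amalMaps a b) f _ hf (i := true) w⟩

theorem stmt11 {α β : Type} (a : FreeGroup α) (b : FreeGroup β)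
    (ha : a ≠ 1) (hb : b ≠ 1)
    (u v : FreeGroup α)
    (h1 : ¬ IsConj u v) (h2 : ¬ IsConj u v⁻¹) :
    ∃ (Q : Type) (_ : Group Q) (_ : Finite Q)
      (φ : PushoutI (amalMaps a b) →* Q),
      Function.Surjective φ ∧
      orderOf (φ (PushoutI.of (φ := amalMaps a b) true u)) ≠
        orderOf (φ (PushoutI.of (φ := amalMaps a b) true v)) := by
  obtain ⟨P, _, _, ψ₁, ψ₂, hab, huv⟩ :=
    isTwoOrderSeparable_freeGroup.exists_monoidHom_of_isPotentElement a
      (isPotentElement_freeGroup hb) h1 h2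
  obtain ⟨Φ, hΦ⟩ := exists_pushoutI_hom_of_apply_eq ψ₁ ψ₂ hab
  refine ⟨Φ.range, inferInstance, inferInstance, Φ.rangeRestrict, Φ.rangeRestrict_surjective, ?_⟩
  simpa only [← orderOf_injective Φ.range.subtype Subtype.val_injective, subtype_apply,
    MonoidHom.coe_rangeRestrict, hΦ] using huv
end
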